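/- (Uniqueness for the subcritical singular Liouville equation on the sphere, planar form; Theorem 1.7(i).) Let N ≥ 0 be an integer, q₁, …, q_N distinct points of ℝ², α₁, …, α_N ∈ (−1, 0), and ρ > 0 with ρ < 4π(2 + Σ_{j=1}^N α_j). Set l = (4π(2 + Σ_j α_j) − ρ)/(4π) and h(x) = (1 + |x|²)^{−l}. Suppose for i = 1, 2 that u_i : ℝ² ∖ {q₁, …, q_N} → ℝ is C² and satisfies: Δu_i(x) + h(x) e^{u_i(x)} = 0 for all x ∈ ℝ² ∖ {q₁, …, q_N}; for each j the function x ↦ u_i(x) − 2α_j ln|x − q_j| extends continuously to q_j; ∫_{ℝ²} h(x) e^{u_i(x)} dx = ρ; and u_i(x) + ((ρ − 4π Σ_j α_j)/(4π)) · ln(1 + |x|²) converges to a finite limit as |x| → ∞. Then u₁ = u₂ on ℝ² ∖ {q₁, …, q_N}. -/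

import Mathlib

open Real MeasureTheory Metric Filter Topology RealInnerProductSpace

noncomputable section

/-- The plane `ℝ²`. -/
abbrev Pl := EuclideanSpace ℝ (Fin 2)

/-- The Laplacian `Δu = ∂²u/∂x₁² + ∂²u/∂x₂²` of a function on `ℝ²`. -/
def lap (u : Pl → ℝ) (x : Pl) : ℝ :=
  ∑ i : Fin 2, fderiv ℝ (fun y => fderiv ℝ u y (EuclideanSpace.single i 1)) x
    (EuclideanSpace.single i 1)

/-- `u` is a solution of the planar form of the singular mean field equation on the
sphere with singular sources `4 pi al(j) delta_(q j)` and total mass `RHO`. -/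
def SphSol (N : ℕ) (q : Fin N → Pl) (al : Fin N → ℝ) (ρ : ℝ) (u : Pl → ℝ) : Prop :=
  ContDiffOn ℝ 2 u (Set.range q)ᶜ ∧
  (∀ x ∉ Set.range q,
    lap u x + (1 + ‖x‖ ^ 2) ^ (-((4*π*(2 + ∑ j, al j) - ρ)/(4*π))) * Real.exp (u x) = 0) ∧
  (∀ j, ∃ L : ℝ, Tendsto (fun x => u x - 2 * al j * Real.log ‖x - q j‖)
      (𝓝[(Set.range q)ᶜ] (q j)) (nhds L)) ∧
  (∫ x : Pl, (1 + ‖x‖ ^ 2) ^ (-((4*π*(2 + ∑ j, al j) - ρ)/(4*π))) * Real.exp (u x) = ρ) ∧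
  (∃ L : ℝ, Tendsto (fun x => u x + ((ρ - 4*π*(∑ j, al j))/(4*π)) * Real.log (1 + ‖x‖ ^ 2))
      (Bornology.cobounded Pl) (nhds L))

/-!
Write `w = log h` for the logarithm of the weight; `ρ < 4π (2 + ∑ α_j)` makes `Δw < 0`. For two
solutions put `f = u₁ - u₂` and `a = w + (u₁ + u₂) / 2`, so that `Δf = -2 eᵃ sinh (f / 2)` and
`Δa = Δw - eᵃ cosh (f / 2)`. Then `P = ¼ e⁻ᵃ |∇f|² + cosh (f / 2)` satisfies
`ΔP ≥ -¼ e⁻ᵃ Δw |∇f|² ≥ 0` off the punctures. Since `Δf` has an integrable power singularity at each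
puncture, comparing `f` with its mirror images on half discs gives a gradient estimate that
exactly balances `e⁻ᵃ`, and inversion turns the point at infinity into one more such point. Hence
`P` is a bounded subharmonic function on a finitely punctured plane, so it is constant, and
`Δw < 0` forces `∇f = 0`. Thus `Δf = 0`, that is `sinh (f / 2) = 0`.
-/

/-- The partial derivative `∂f/∂xᵢ`, in the same encoding as in `lap`, so that
`lap u x = ∑ i, pderiv i (pderiv i u) x` holds definitionally. -/
def pderiv (i : Fin 2) (f : Pl → ℝ) (x : Pl) : ℝ := fderiv ℝ f x (EuclideanSpace.single i 1)

/-- The squared length `|∇f|²` of the gradient. -/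
def gradSq (f : Pl → ℝ) (x : Pl) : ℝ := ∑ i, pderiv i f x ^ 2

section PartialDerivatives

variable {f g : Pl → ℝ} {x : Pl}

lemma pderiv_congr (h : f =ᶠ[𝓝 x] g) (i : Fin 2) : pderiv i f x = pderiv i g x := by
  rw [pderiv, pderiv, h.fderiv_eq]

lemma eventuallyEq_pderiv (h : f =ᶠ[𝓝 x] g) (i : Fin 2) : pderiv i f =ᶠ[𝓝 x] pderiv i g :=
  h.eventuallyEq_nhds.mono fun _ hy => pderiv_congr hy i

lemma pderiv_const (c : ℝ) (i : Fin 2) (x : Pl) : pderiv i (fun _ => c) x = 0 := by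
  simp [pderiv]

lemma pderiv_add (hf : DifferentiableAt ℝ f x) (hg : DifferentiableAt ℝ g x) (i : Fin 2) :
    pderiv i (fun y => f y + g y) x = pderiv i f x + pderiv i g x := by
  simp [pderiv, fderiv_fun_add hf hg]

lemma pderiv_mul (hf : DifferentiableAt ℝ f x) (hg : DifferentiableAt ℝ g x) (i : Fin 2) :
    pderiv i (fun y => f y * g y) x = f x * pderiv i g x + g x * pderiv i f x := by
  simp [pderiv, fderiv_fun_mul hf hg]

lemma pderiv_comp {φ : ℝ → ℝ} {φ' : ℝ} (hf : DifferentiableAt ℝ f x)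
    (hφ : HasDerivAt φ φ' (f x)) (i : Fin 2) :
    pderiv i (fun y => φ (f y)) x = φ' * pderiv i f x := by
  have h : fderiv ℝ (fun y => φ (f y)) x = φ' • fderiv ℝ f x :=
    (hφ.comp_hasFDerivAt x hf.hasFDerivAt).fderiv
  simp [pderiv, h]

lemma contDiffAt_pderiv {m n : WithTop ℕ∞} (hf : ContDiffAt ℝ n f x) (hmn : m + 1 ≤ n)
    (i : Fin 2) : ContDiffAt ℝ m (pderiv i f) x :=
  (hf.fderiv_right hmn).clm_apply contDiffAt_const

lemma differentiableAt_pderiv (hf : ContDiffAt ℝ 2 f x) (i : Fin 2) :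
    DifferentiableAt ℝ (pderiv i f) x :=
  (contDiffAt_pderiv (m := 1) hf (by norm_num) i).differentiableAt one_ne_zero

lemma pderiv_pderiv_eq (hf : ContDiffAt ℝ 2 f x) (i j : Fin 2) :
    pderiv i (pderiv j f) x =
      fderiv ℝ (fderiv ℝ f) x (EuclideanSpace.single i 1) (EuclideanSpace.single j 1) := by
  have hd : DifferentiableAt ℝ (fderiv ℝ f) x :=
    (hf.fderiv_right (m := 1) (by norm_num)).differentiableAt one_ne_zero
  unfold pderiv
  rw [fderiv_clm_apply hd (differentiableAt_const _)]
  simp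

lemma pderiv_comm (hf : ContDiffAt ℝ 2 f x) (i j : Fin 2) :
    pderiv i (pderiv j f) x = pderiv j (pderiv i f) x := by
  rw [pderiv_pderiv_eq hf, pderiv_pderiv_eq hf]
  exact hf.isSymmSndFDerivAt (by simp) _ _

lemma fderiv_eq_sum_pderiv (v : Pl) : fderiv ℝ f x v = ∑ i, v i * pderiv i f x := by
  conv_lhs => rw [← (EuclideanSpace.basisFun (Fin 2) ℝ).sum_repr v]
  simp [pderiv]

lemma gradSq_nonneg : 0 ≤ gradSq f x := Finset.sum_nonneg fun _ _ => sq_nonneg _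

lemma fderiv_eq_zero_of_gradSq_eq_zero (h : gradSq f x = 0) : fderiv ℝ f x = 0 := by
  have hi : ∀ i, pderiv i f x = 0 := fun i => pow_eq_zero_iff two_ne_zero |>.1 <|
    (Finset.sum_eq_zero_iff_of_nonneg fun _ _ => sq_nonneg _).1 h i (Finset.mem_univ i)
  ext v
  simp [fderiv_eq_sum_pderiv, hi]

lemma gradSq_le_norm_fderiv : gradSq f x ≤ 2 * ‖fderiv ℝ f x‖ ^ 2 := by
  have hi : ∀ i, pderiv i f x ^ 2 ≤ ‖fderiv ℝ f x‖ ^ 2 := fun i => by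
    have h := (fderiv ℝ f x).le_opNorm (EuclideanSpace.single i 1)
    rw [PiLp.norm_single, norm_one, mul_one] at h
    exact sq_le_sq' (neg_le_of_abs_le h) (le_of_abs_le h)
  calc gradSq f x ≤ ∑ _i : Fin 2, ‖fderiv ℝ f x‖ ^ 2 := Finset.sum_le_sum fun i _ => hi i
    _ = 2 * ‖fderiv ℝ f x‖ ^ 2 := by simp

end PartialDerivatives

section Laplacian

variable {f g : Pl → ℝ} {x : Pl}

lemma lap_congr (h : f =ᶠ[𝓝 x] g) : lap f x = lap g x :=
  Finset.sum_congr rfl fun i _ => pderiv_congr (eventuallyEq_pderiv h i) i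

lemma lap_const (c : ℝ) (x : Pl) : lap (fun _ => c) x = 0 := by
  simp [lap]

lemma lap_add (hf : ContDiffAt ℝ 2 f x) (hg : ContDiffAt ℝ 2 g x) :
    lap (fun y => f y + g y) x = lap f x + lap g x := by
  have second : ∀ i, pderiv i (pderiv i fun y => f y + g y) x
      = pderiv i (pderiv i f) x + pderiv i (pderiv i g) x := fun i => by
    rw [← pderiv_add (differentiableAt_pderiv hf i) (differentiableAt_pderiv hg i)]
    refine pderiv_congr ?_ i
    filter_upwards [hf.eventually (by simp), hg.eventually (by simp)] with y hfy hgy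
    exact pderiv_add (hfy.differentiableAt two_ne_zero) (hgy.differentiableAt two_ne_zero) i
  calc lap (fun y => f y + g y) x
      = ∑ i, (pderiv i (pderiv i f) x + pderiv i (pderiv i g) x) :=
        Finset.sum_congr rfl fun i _ => second i
    _ = lap f x + lap g x := Finset.sum_add_distrib

lemma lap_mul (hf : ContDiffAt ℝ 2 f x) (hg : ContDiffAt ℝ 2 g x) :
    lap (fun y => f y * g y) x
      = f x * lap g x + g x * lap f x + 2 * ∑ i, pderiv i f x * pderiv i g x := by
  have hf' := hf.differentiableAt two_ne_zero
  have hg' := hg.differentiableAt two_ne_zero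
  have first : ∀ i, pderiv i (fun y => f y * g y)
      =ᶠ[𝓝 x] fun y => f y * pderiv i g y + g y * pderiv i f y := fun i => by
    filter_upwards [hf.eventually (by simp), hg.eventually (by simp)] with y hfy hgy
    exact pderiv_mul (hfy.differentiableAt two_ne_zero) (hgy.differentiableAt two_ne_zero) i
  have second : ∀ i, pderiv i (pderiv i fun y => f y * g y) x
      = f x * pderiv i (pderiv i g) x + g x * pderiv i (pderiv i f) x
        + 2 * (pderiv i f x * pderiv i g x) := fun i => by
    have dfi := differentiableAt_pderiv hf i
    have dgi := differentiableAt_pderiv hg i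
    rw [pderiv_congr (first i), pderiv_add (hf'.fun_mul dgi) (hg'.fun_mul dfi),
      pderiv_mul hf' dgi, pderiv_mul hg' dfi]
    ring
  calc lap (fun y => f y * g y) x
      = ∑ i, (f x * pderiv i (pderiv i g) x + g x * pderiv i (pderiv i f) x
          + 2 * (pderiv i f x * pderiv i g x)) := Finset.sum_congr rfl fun i _ => second i
    _ = f x * lap g x + g x * lap f x + 2 * ∑ i, pderiv i f x * pderiv i g x := by
        simp only [Finset.sum_add_distrib, ← Finset.mul_sum]; rfl

lemma lap_const_mul (c : ℝ) (hf : ContDiffAt ℝ 2 f x) :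
    lap (fun y => c * f y) x = c * lap f x := by
  simp [lap_mul contDiffAt_const hf, lap_const, pderiv_const]

lemma lap_neg (hf : ContDiffAt ℝ 2 f x) : lap (fun y => -f y) x = -lap f x := by
  simpa using lap_const_mul (-1) hf

lemma lap_sub (hf : ContDiffAt ℝ 2 f x) (hg : ContDiffAt ℝ 2 g x) :
    lap (fun y => f y - g y) x = lap f x - lap g x := by
  simpa only [sub_eq_add_neg, lap_neg hg] using lap_add hf hg.neg

lemma lap_comp {φ φ' : ℝ → ℝ} {φ'' : ℝ} (hf : ContDiffAt ℝ 2 f x)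
    (hφ : ∀ᶠ t in 𝓝 (f x), HasDerivAt φ (φ' t) t) (hφ' : HasDerivAt φ' φ'' (f x)) :
    lap (fun y => φ (f y)) x = φ'' * gradSq f x + φ' (f x) * lap f x := by
  have first : ∀ i, pderiv i (fun y => φ (f y)) =ᶠ[𝓝 x] fun y => φ' (f y) * pderiv i f y := by
    intro i
    filter_upwards [hf.eventually (by simp), hf.continuousAt.eventually hφ] with y hfy hφy
    exact pderiv_comp (hfy.differentiableAt two_ne_zero) hφy i
  have second : ∀ i, pderiv i (pderiv i fun y => φ (f y)) x
      = φ'' * pderiv i f x ^ 2 + φ' (f x) * pderiv i (pderiv i f) x := fun i => by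
    have df := hf.differentiableAt two_ne_zero
    have dφ' : DifferentiableAt ℝ (fun y => φ' (f y)) x := hφ'.differentiableAt.comp x df
    rw [pderiv_congr (first i), pderiv_mul dφ' (differentiableAt_pderiv hf i),
      pderiv_comp df hφ']
    ring
  calc lap (fun y => φ (f y)) x
      = ∑ i, (φ'' * pderiv i f x ^ 2 + φ' (f x) * pderiv i (pderiv i f) x) :=
        Finset.sum_congr rfl fun i _ => second i
    _ = φ'' * gradSq f x + φ' (f x) * lap f x := by
        simp only [Finset.sum_add_distrib, ← Finset.mul_sum]; rfl

lemma pderiv_lap (hf : ContDiffAt ℝ 3 f x) (j : Fin 2) :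
    pderiv j (lap f) x = lap (pderiv j f) x := by
  have hd : ∀ i, DifferentiableAt ℝ (pderiv i (pderiv i f)) x := fun i =>
    differentiableAt_pderiv (contDiffAt_pderiv hf (by norm_num) i) i
  have swap : ∀ i, pderiv j (pderiv i (pderiv i f)) x = pderiv i (pderiv i (pderiv j f)) x := by
    intro i
    rw [pderiv_comm (contDiffAt_pderiv hf (by norm_num) i)]
    refine pderiv_congr ?_ i
    filter_upwards [hf.eventually (by simp)] with y hy
    exact pderiv_comm (hy.of_le (by norm_num)) j i
  have hlap : lap f = fun y => pderiv 0 (pderiv 0 f) y + pderiv 1 (pderiv 1 f) y :=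
    funext fun y => Fin.sum_univ_two fun i => pderiv i (pderiv i f) y
  rw [hlap, pderiv_add (hd 0) (hd 1), swap, swap]
  exact (Fin.sum_univ_two fun i => pderiv i (pderiv i (pderiv j f)) x).symm

end Laplacian

section MaximumPrinciple

variable {f : Pl → ℝ} {x : Pl}

lemma hasDerivAt_pderiv_line {i : Fin 2} {t : ℝ}
    (hf : DifferentiableAt ℝ f (x + t • EuclideanSpace.single i 1)) :
    HasDerivAt (fun s : ℝ => f (x + s • EuclideanSpace.single i 1))
      (pderiv i f (x + t • EuclideanSpace.single i 1)) t := by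
  have hline : HasDerivAt (fun s : ℝ => x + s • (EuclideanSpace.single i 1 : Pl))
      (EuclideanSpace.single i 1) t := by
    simpa using ((hasDerivAt_id t).smul_const (EuclideanSpace.single i 1 : Pl)).const_add x
  exact hf.hasFDerivAt.comp_hasDerivAt t hline

lemma pderiv_pderiv_nonneg_of_isLocalMin (hf : ContDiffAt ℝ 2 f x) (hmin : IsLocalMin f x)
    (i : Fin 2) : 0 ≤ pderiv i (pderiv i f) x := by
  by_contra! hneg
  set e : Pl := EuclideanSpace.single i 1
  set g : ℝ → ℝ := fun s => f (x + s • e)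
  have hx : x + (0 : ℝ) • e = x := by simp
  have hline : Tendsto (fun s : ℝ => x + s • e) (𝓝 0) (𝓝 x) := by
    simpa [hx] using (show Continuous fun s : ℝ => x + s • e by fun_prop).tendsto 0
  have hg' : deriv g =ᶠ[𝓝 0] fun s => pderiv i f (x + s • e) := by
    filter_upwards [hline.eventually (hf.eventually (by simp))] with s hs
    exact (hasDerivAt_pderiv_line (hs.differentiableAt two_ne_zero)).deriv
  have hg'' : deriv (deriv g) 0 = pderiv i (pderiv i f) x := by
    rw [hg'.deriv_eq, (hasDerivAt_pderiv_line (by simpa using differentiableAt_pderiv hf i)).deriv,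
      hx]
  have hgcont : ContinuousAt g 0 := (hasDerivAt_pderiv_line (x := x) (i := i) (t := 0)
    (by simpa using hf.differentiableAt two_ne_zero)).continuousAt
  have hgmin : IsLocalMin g 0 := by
    filter_upwards [hline.eventually hmin] with s hs
    simpa [g] using hs
  have hgmax : IsLocalMax g 0 :=
    isLocalMax_of_deriv_deriv_neg (hg''.trans_lt hneg) hgmin.deriv_eq_zero hgcont
  have hconst : g =ᶠ[𝓝 0] fun _ => g 0 := by
    filter_upwards [hgmin, hgmax] with s h1 h2 using le_antisymm h2 h1
  have hzero : deriv (deriv g) 0 = 0 := by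
    rw [hconst.deriv.deriv_eq]; simp
  linarith

lemma lap_nonneg_of_isLocalMin (hf : ContDiffAt ℝ 2 f x) (hmin : IsLocalMin f x) :
    0 ≤ lap f x :=
  Finset.sum_nonneg fun i _ => pderiv_pderiv_nonneg_of_isLocalMin hf hmin i

end MaximumPrinciple

section ChangeOfVariables

variable {f : Pl → ℝ} {T : Pl → Pl} {x : Pl}

lemma pderiv_clm (L : Pl →L[ℝ] ℝ) (i : Fin 2) (x : Pl) :
    pderiv i L x = L (EuclideanSpace.single i 1) := by
  rw [pderiv, L.fderiv]

lemma lap_clm (L : Pl →L[ℝ] ℝ) (x : Pl) : lap L x = 0 := by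
  have h : ∀ i, pderiv i L = fun _ => L (EuclideanSpace.single i 1) := fun i =>
    funext (pderiv_clm L i)
  exact Finset.sum_eq_zero fun i _ => by
    change pderiv i (pderiv i L) x = 0
    rw [h, pderiv_const]

lemma fderiv_apply_coord (hT : DifferentiableAt ℝ T x) (i j : Fin 2) :
    fderiv ℝ T x (EuclideanSpace.single i 1) j = pderiv i (fun y => T y j) x := by
  have h : fderiv ℝ (fun y => T y j) x
      = (EuclideanSpace.proj j : Pl →L[ℝ] ℝ).comp (fderiv ℝ T x) :=
    ((EuclideanSpace.proj j : Pl →L[ℝ] ℝ).hasFDerivAt.comp x hT.hasFDerivAt).fderiv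
  rw [pderiv, h]
  rfl

lemma pderiv_comp_map (hf : DifferentiableAt ℝ f (T x)) (hT : DifferentiableAt ℝ T x)
    (i : Fin 2) :
    pderiv i (fun y => f (T y)) x
      = pderiv 0 f (T x) * pderiv i (fun y => T y 0) x
        + pderiv 1 f (T x) * pderiv i (fun y => T y 1) x := by
  have h : fderiv ℝ (fun y => f (T y)) x = (fderiv ℝ f (T x)).comp (fderiv ℝ T x) :=
    (hf.hasFDerivAt.comp x hT.hasFDerivAt).fderiv
  rw [pderiv, h, ContinuousLinearMap.comp_apply, fderiv_eq_sum_pderiv, Fin.sum_univ_two,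
    fderiv_apply_coord hT, fderiv_apply_coord hT]
  ring

lemma pderiv_pderiv_comp_map (hf : ContDiffAt ℝ 2 f (T x)) (hT : ContDiffAt ℝ 2 T x)
    (i : Fin 2) :
    pderiv i (pderiv i fun y => f (T y)) x
      = pderiv 0 f (T x) * pderiv i (pderiv i fun y => T y 0) x
        + pderiv 1 f (T x) * pderiv i (pderiv i fun y => T y 1) x
        + pderiv 0 (pderiv 0 f) (T x) * pderiv i (fun y => T y 0) x ^ 2
        + 2 * pderiv 0 (pderiv 1 f) (T x)
          * (pderiv i (fun y => T y 0) x * pderiv i (fun y => T y 1) x)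
        + pderiv 1 (pderiv 1 f) (T x) * pderiv i (fun y => T y 1) x ^ 2 := by
  have dT : DifferentiableAt ℝ T x := hT.differentiableAt two_ne_zero
  have first : pderiv i (fun y => f (T y)) =ᶠ[𝓝 x] fun y =>
      pderiv 0 f (T y) * pderiv i (fun y => T y 0) y
        + pderiv 1 f (T y) * pderiv i (fun y => T y 1) y := by
    filter_upwards [hT.eventually (by simp), hT.continuousAt.eventually (hf.eventually (by simp))]
      with y hTy hfy
    exact pderiv_comp_map (hfy.differentiableAt two_ne_zero) (hTy.differentiableAt two_ne_zero) i
  have dfT : ∀ j, DifferentiableAt ℝ (fun y => pderiv j f (T y)) x := fun j =>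
    (differentiableAt_pderiv hf j).comp x dT
  have dpT : ∀ j, DifferentiableAt ℝ (pderiv i fun y => T y j) x := fun j =>
    differentiableAt_pderiv (contDiffAt_euclidean.1 hT j) i
  rw [pderiv_congr first, pderiv_add ((dfT 0).fun_mul (dpT 0)) ((dfT 1).fun_mul (dpT 1)),
    pderiv_mul (dfT 0) (dpT 0), pderiv_mul (dfT 1) (dpT 1),
    pderiv_comp_map (differentiableAt_pderiv hf 0) dT,
    pderiv_comp_map (differentiableAt_pderiv hf 1) dT, pderiv_comm hf 1 0]
  ring

lemma sum_coord_mul_coord (U : Pl ≃ₗᵢ[ℝ] Pl) (j k : Fin 2) :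
    ∑ i, U (EuclideanSpace.single i 1) j * U (EuclideanSpace.single i 1) k
      = if j = k then 1 else 0 := by
  have coord : ∀ (i j : Fin 2), U (EuclideanSpace.single i 1) j
      = ⟪U.symm (EuclideanSpace.single j 1), EuclideanSpace.single i 1⟫ := fun i j => by
    rw [← U.inner_map_map, U.apply_symm_apply, EuclideanSpace.inner_single_left]
    simp
  calc ∑ i, U (EuclideanSpace.single i 1) j * U (EuclideanSpace.single i 1) k
      = ∑ i, ⟪U.symm (EuclideanSpace.single j 1), EuclideanSpace.basisFun (Fin 2) ℝ i⟫
          * ⟪EuclideanSpace.basisFun (Fin 2) ℝ i, U.symm (EuclideanSpace.single k 1)⟫ :=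
        Finset.sum_congr rfl fun i _ => by
          rw [coord, coord, EuclideanSpace.basisFun_apply,
            real_inner_comm (U.symm (EuclideanSpace.single k 1))]
    _ = ⟪(EuclideanSpace.single j 1 : Pl), EuclideanSpace.single k 1⟫ := by
        rw [OrthonormalBasis.sum_inner_mul_inner, U.symm.inner_map_map]
    _ = if j = k then 1 else 0 := by simp [EuclideanSpace.inner_single_left]

lemma lap_comp_conformal {r : ℝ} {U : Pl ≃ₗᵢ[ℝ] Pl} (hf : ContDiffAt ℝ 2 f (T x))
    (hT : ContDiffAt ℝ 2 T x) (hTU : ∀ v, fderiv ℝ T x v = r • U v)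
    (hharm : ∀ j, lap (fun y => T y j) x = 0) :
    lap (fun y => f (T y)) x = r ^ 2 * lap f (T x) := by
  have hp : ∀ i j, pderiv i (fun y => T y j) x = r * U (EuclideanSpace.single i 1) j := by
    intro i j
    rw [← fderiv_apply_coord (hT.differentiableAt two_ne_zero), hTU]
    rfl
  have h00 := sum_coord_mul_coord U 0 0
  have h01 := sum_coord_mul_coord U 0 1
  have h11 := sum_coord_mul_coord U 1 1
  have harm0 := hharm 0
  have harm1 := hharm 1
  change ∑ i, pderiv i (pderiv i fun y => f (T y)) x = r ^ 2 * ∑ i, pderiv i (pderiv i f) (T x)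
  change ∑ i, pderiv i (pderiv i fun y => T y 0) x = 0 at harm0
  change ∑ i, pderiv i (pderiv i fun y => T y 1) x = 0 at harm1
  simp only [Fin.sum_univ_two, pderiv_pderiv_comp_map hf hT, hp, ↓reduceIte, zero_ne_one]
    at h00 h01 h11 harm0 harm1 ⊢
  linear_combination pderiv 0 f (T x) * harm0 + pderiv 1 f (T x) * harm1
    + r ^ 2 * (pderiv 0 (pderiv 0 f) (T x) * h00 + pderiv 1 (pderiv 1 f) (T x) * h11
      + 2 * pderiv 0 (pderiv 1 f) (T x) * h01)

lemma lap_comp_similarity (c : Pl) (r : ℝ) (U : Pl ≃ₗᵢ[ℝ] Pl)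
    (hf : ContDiffAt ℝ 2 f (c + r • U x)) :
    lap (fun y => f (c + r • U y)) x = r ^ 2 * lap f (c + r • U x) := by
  have hT : ContDiff ℝ 2 fun y => c + r • U y := contDiff_const.add (U.contDiff.const_smul r)
  have hT' : HasFDerivAt (fun y => c + r • U y) (r • (U : Pl →L[ℝ] Pl)) x :=
    ((U : Pl →L[ℝ] Pl).hasFDerivAt.const_smul r).const_add c
  refine lap_comp_conformal (T := fun y => c + r • U y) hf hT.contDiffAt
    (fun v => by rw [hT'.fderiv]; rfl) fun j => ?_
  set L : Pl →L[ℝ] ℝ := r • (EuclideanSpace.proj j : Pl →L[ℝ] ℝ).comp (U : Pl →L[ℝ] Pl)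
  calc lap (fun y => (c + r • U y) j) x = lap (fun y => c j + L y) x := rfl
    _ = 0 := by rw [lap_add contDiffAt_const L.contDiff.contDiffAt, lap_const, lap_clm, add_zero]

end ChangeOfVariables

section ExplicitLaplacians

variable {c x : Pl}

lemma contDiff_norm_sub_sq (c : Pl) : ContDiff ℝ 2 fun y => ‖y - c‖ ^ 2 :=
  (contDiff_id.sub contDiff_const).norm_sq ℝ

lemma pderiv_norm_sub_sq (i : Fin 2) (c x : Pl) :
    pderiv i (fun y => ‖y - c‖ ^ 2) x = 2 * (x i - c i) := by
  have h := ((hasFDerivAt_id x).sub_const c).norm_sq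
  simp only [id] at h
  rw [pderiv, h.fderiv]
  simp [EuclideanSpace.inner_single_right]

lemma gradSq_norm_sub_sq (c x : Pl) : gradSq (fun y => ‖y - c‖ ^ 2) x = 4 * ‖x - c‖ ^ 2 := by
  simp only [gradSq, pderiv_norm_sub_sq, mul_pow, ← Finset.mul_sum]
  norm_num [EuclideanSpace.norm_sq_eq]

lemma lap_norm_sub_sq (c x : Pl) : lap (fun y => ‖y - c‖ ^ 2) x = 4 := by
  have second : ∀ i, pderiv i (pderiv i fun y => ‖y - c‖ ^ 2) x = 2 := fun i => by
    have h : pderiv i (fun y => ‖y - c‖ ^ 2)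
        = fun y => -2 * c i + (2 • EuclideanSpace.proj i : Pl →L[ℝ] ℝ) y := by
      funext y
      rw [pderiv_norm_sub_sq]
      simp
      ring
    rw [h, pderiv_add (differentiableAt_const _) (ContinuousLinearMap.differentiableAt _),
      pderiv_const, pderiv_clm]
    simp
  calc lap (fun y => ‖y - c‖ ^ 2) x = ∑ _i : Fin 2, (2 : ℝ) :=
        Finset.sum_congr rfl fun i _ => second i
    _ = 4 := by norm_num

lemma norm_sub_sq_pos (h : x ≠ c) : 0 < ‖x - c‖ ^ 2 :=
  pow_pos (norm_pos_iff.2 (sub_ne_zero.2 h)) 2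

lemma contDiffAt_log_norm_sub_sq (h : x ≠ c) :
    ContDiffAt ℝ 2 (fun y => Real.log (‖y - c‖ ^ 2)) x :=
  (contDiff_norm_sub_sq c).contDiffAt.log (norm_sub_sq_pos h).ne'

lemma lap_log_norm_sub_sq (h : x ≠ c) : lap (fun y => Real.log (‖y - c‖ ^ 2)) x = 0 := by
  have hpos := norm_sub_sq_pos h
  have h1 : ∀ᶠ t in 𝓝 (‖x - c‖ ^ 2), HasDerivAt Real.log t⁻¹ t := by
    filter_upwards [lt_mem_nhds hpos] with t ht using Real.hasDerivAt_log ht.ne'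
  rw [lap_comp (contDiff_norm_sub_sq c).contDiffAt h1 (hasDerivAt_inv hpos.ne'),
    lap_norm_sub_sq, gradSq_norm_sub_sq]
  field_simp
  ring

lemma contDiffAt_norm_sub_sq_rpow (h : x ≠ c) (p : ℝ) :
    ContDiffAt ℝ 2 (fun y => (‖y - c‖ ^ 2) ^ p) x :=
  (contDiff_norm_sub_sq c).contDiffAt.rpow_const_of_ne (norm_sub_sq_pos h).ne'

lemma lap_norm_sub_sq_rpow (h : x ≠ c) (p : ℝ) :
    lap (fun y => (‖y - c‖ ^ 2) ^ p) x = 4 * p ^ 2 * (‖x - c‖ ^ 2) ^ (p - 1) := by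
  have hpos := norm_sub_sq_pos h
  have h1 : ∀ᶠ t in 𝓝 (‖x - c‖ ^ 2), HasDerivAt (fun t : ℝ => t ^ p) (p * t ^ (p - 1)) t := by
    filter_upwards [lt_mem_nhds hpos] with t ht using Real.hasDerivAt_rpow_const (Or.inl ht.ne')
  have h2 : HasDerivAt (fun t : ℝ => p * t ^ (p - 1))
      (p * ((p - 1) * (‖x - c‖ ^ 2) ^ (p - 1 - 1))) (‖x - c‖ ^ 2) :=
    (Real.hasDerivAt_rpow_const (Or.inl hpos.ne')).const_mul p
  have split : (‖x - c‖ ^ 2) ^ (p - 1) = (‖x - c‖ ^ 2) ^ (p - 1 - 1) * ‖x - c‖ ^ 2 := by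
    rw [← Real.rpow_add_one hpos.ne', sub_add_cancel]
  rw [lap_comp (φ := fun t => t ^ p) (contDiff_norm_sub_sq c).contDiffAt h1 h2, lap_norm_sub_sq,
    gradSq_norm_sub_sq, split]
  ring

lemma lap_comp_inner {φ φ' : ℝ → ℝ} {φ'' : ℝ} (v : Pl)
    (hφ : ∀ᶠ t in 𝓝 ⟪v, x⟫, HasDerivAt φ (φ' t) t) (hφ' : HasDerivAt φ' φ'' ⟪v, x⟫) :
    lap (fun y => φ ⟪v, y⟫) x = φ'' * ‖v‖ ^ 2 := by
  have hgrad : gradSq (innerSL ℝ v) x = ‖v‖ ^ 2 := by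
    simp only [gradSq, pderiv_clm]
    simp [EuclideanSpace.inner_single_right, EuclideanSpace.norm_sq_eq]
  have h := lap_comp (f := innerSL ℝ v) (innerSL ℝ v).contDiff.contDiffAt hφ hφ'
  rw [hgrad, lap_clm, mul_zero, add_zero] at h
  exact h

lemma lap_log_one_add_norm_sq (x : Pl) :
    lap (fun y => Real.log (1 + ‖y‖ ^ 2)) x = 4 / (1 + ‖x‖ ^ 2) ^ 2 := by
  have hpos : 0 < 1 + ‖x‖ ^ 2 := by positivity
  have h1 : ∀ᶠ t in 𝓝 (‖x - 0‖ ^ 2), HasDerivAt (fun t => Real.log (1 + t)) (1 + t)⁻¹ t := by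
    filter_upwards [lt_mem_nhds (show -1 < ‖x - 0‖ ^ 2 by linarith [sq_nonneg ‖x - 0‖])] with t ht
    simpa using ((hasDerivAt_id t).const_add 1).log (by simp; linarith)
  have h2 : HasDerivAt (fun t : ℝ => (1 + t)⁻¹) (-1 / (1 + ‖x - 0‖ ^ 2) ^ 2) (‖x - 0‖ ^ 2) :=
    ((hasDerivAt_id (‖x - 0‖ ^ 2)).const_add 1).fun_inv (by simpa using hpos.ne')
  have h := lap_comp (φ := fun t => Real.log (1 + t)) (contDiff_norm_sub_sq 0).contDiffAt h1 h2
  rw [lap_norm_sub_sq, gradSq_norm_sub_sq] at h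
  simp only [sub_zero] at h
  rw [h]
  field_simp
  ring

end ExplicitLaplacians

section Inversion

open EuclideanGeometry

variable {f : Pl → ℝ} {x : Pl}

lemma norm_inversion_zero_one (x : Pl) : ‖inversion (0 : Pl) 1 x‖ = ‖x‖⁻¹ := by
  simpa using dist_inversion_center (0 : Pl) x 1

lemma contDiffAt_inversion_zero_one (hx : x ≠ 0) : ContDiffAt ℝ 2 (inversion (0 : Pl) 1) x :=
  contDiffAt_const.inversion contDiffAt_const contDiffAt_id hx

lemma lap_inversion_coord (hx : x ≠ 0) (j : Fin 2) :
    lap (fun y => inversion (0 : Pl) 1 y j) x = 0 := by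
  set L : Pl →L[ℝ] ℝ := EuclideanSpace.proj j
  have hpos := norm_sub_sq_pos hx
  have hcoord : (fun y => inversion (0 : Pl) 1 y j) = fun y => L y * (‖y - 0‖ ^ 2) ^ (-1 : ℝ) := by
    funext y
    simp [inversion, L, Real.rpow_neg_one, mul_comm]
  have hgrad : ∀ i, pderiv i (fun y => (‖y - 0‖ ^ 2) ^ (-1 : ℝ)) x
      = -1 * (‖x - 0‖ ^ 2) ^ (-1 - 1 : ℝ) * (2 * (x i - (0 : Pl) i)) := fun i => by
    rw [pderiv_comp (φ := fun t => t ^ (-1 : ℝ))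
      ((contDiff_norm_sub_sq 0).differentiable two_ne_zero x)
      (Real.hasDerivAt_rpow_const (Or.inl hpos.ne')), pderiv_norm_sub_sq]
  rw [hcoord, lap_mul L.contDiff.contDiffAt (contDiffAt_norm_sub_sq_rpow hx _), lap_clm,
    lap_norm_sub_sq_rpow hx]
  simp only [hgrad, pderiv_clm, L]
  fin_cases j <;> simp <;> ring

lemma lap_comp_inversion (hx : x ≠ 0) (hf : ContDiffAt ℝ 2 f (inversion 0 1 x)) :
    lap (fun y => f (inversion 0 1 y)) x = (‖x‖ ^ 4)⁻¹ * lap f (inversion 0 1 x) := by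
  have h := lap_comp_conformal (r := (1 / dist x 0) ^ 2) hf (contDiffAt_inversion_zero_one hx)
    (fun v => by rw [(hasFDerivAt_inversion hx).fderiv]; rfl) (lap_inversion_coord hx)
  rw [h, dist_zero_right]
  congr 1
  ring

end Inversion

/-- `f` is superharmonic on `U` in the classical sense: twice continuously differentiable at the
points of `U`, with nonpositive Laplacian there. -/
structure SuperharmonicOn (f : Pl → ℝ) (U : Set Pl) : Prop where
  contDiffAt : ∀ x ∈ U, ContDiffAt ℝ 2 f x
  lap_nonpos : ∀ x ∈ U, lap f x ≤ 0

section MinimumPrinciple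

variable {ψ : Pl → ℝ} {Ω U S : Set Pl}

lemma isCompact_sublevel_of_nonneg_at_frontier (hUb : Bornology.IsBounded U)
    (hcont : ContinuousOn ψ U)
    (hbdry : ∀ x ∈ frontier U, ∀ ε > 0, ∀ᶠ y in 𝓝[U] x, -ε ≤ ψ y) {c : ℝ} (hc : c < 0) :
    IsCompact {x ∈ U | ψ x ≤ c} := by
  refine Metric.isCompact_of_isClosed_isBounded (isClosed_iff_frequently.2 fun z hz => ?_)
    (hUb.subset (Set.sep_subset _ _))
  have hzU : ∃ᶠ y in 𝓝[U] z, ψ y ≤ c := by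
    rw [frequently_nhdsWithin_iff]
    exact hz.mono fun y hy => ⟨hy.2, hy.1⟩
  have hz_mem : z ∈ U := by
    by_contra hzU'
    have hfr : z ∈ frontier U :=
      ⟨mem_closure_iff_frequently.2 (hz.mono fun y hy => hy.1),
        fun hint => hzU' (interior_subset hint)⟩
    obtain ⟨y, hyc, hy⟩ := (hzU.and_eventually (hbdry z hfr (-c / 2) (by linarith))).exists
    linarith
  exact ⟨hz_mem, isClosed_Iic.mem_of_frequently_of_tendsto hzU (hcont z hz_mem)⟩

lemma nonneg_of_lap_neg (hU : IsOpen U) (hUb : Bornology.IsBounded U)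
    (hreg : ∀ x ∈ U, ContDiffAt ℝ 2 ψ x) (hlap : ∀ x ∈ U, lap ψ x < 0)
    (hbdry : ∀ x ∈ frontier U, ∀ ε > 0, ∀ᶠ y in 𝓝[U] x, -ε ≤ ψ y) : ∀ x ∈ U, 0 ≤ ψ x := by
  by_contra! ⟨x, hx, hneg⟩
  have hcont : ContinuousOn ψ U := fun y hy => (hreg y hy).continuousAt.continuousWithinAt
  obtain ⟨z, ⟨hzU, hzx⟩, hzmin⟩ :=
    (isCompact_sublevel_of_nonneg_at_frontier hUb hcont hbdry hneg).exists_isMinOn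
      ⟨x, hx, le_rfl⟩ (hcont.mono (Set.sep_subset _ _))
  have hmin : IsLocalMin ψ z := by
    filter_upwards [hU.mem_nhds hzU] with y hy
    by_contra! hyz
    exact hyz.not_ge (hzmin ⟨hy, hyz.le.trans hzx⟩)
  exact (hlap z hzU).not_ge (lap_nonneg_of_isLocalMin (hreg z hzU) hmin)

lemma tendsto_log_norm_sub_sq (p : Pl) :
    Tendsto (fun y => Real.log (‖y - p‖ ^ 2)) (𝓝[≠] p) atBot := by
  refine Real.tendsto_log_nhdsGT_zero.comp (tendsto_nhdsWithin_iff.2 ⟨?_, ?_⟩)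
  · have h : Continuous fun y => ‖y - p‖ ^ 2 := by fun_prop
    simpa using (h.tendsto p).mono_left nhdsWithin_le_nhds
  · filter_upwards [self_mem_nhdsWithin] with y hy using norm_sub_sq_pos hy

lemma exists_nonneg_quadratic (hΩ : Bornology.IsBounded Ω) (p : Pl) :
    ∃ C : ℝ, ∀ x ∈ Ω, 0 ≤ C - ‖x - p‖ ^ 2 := by
  obtain ⟨R, hR⟩ := hΩ.subset_closedBall p
  refine ⟨R ^ 2, fun x hx => ?_⟩
  have : ‖x - p‖ ≤ R := mem_closedBall_iff_norm.1 (hR hx)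
  nlinarith [norm_nonneg (x - p)]

lemma exists_nonneg_log (hΩ : Bornology.IsBounded Ω) (p : Pl) :
    ∃ C : ℝ, ∀ x ∈ Ω, 0 ≤ C - Real.log (‖x - p‖ ^ 2) := by
  obtain ⟨C, hC⟩ := exists_nonneg_quadratic hΩ p
  exact ⟨C, fun x hx => by linarith [hC x hx, Real.log_le_self (sq_nonneg ‖x - p‖)]⟩

lemma exists_singular_barrier (hΩ : Bornology.IsBounded Ω) (hS : S.Finite) :
    ∃ B : Pl → ℝ, (∀ x ∈ Ω \ S, ContDiffAt ℝ 2 B x ∧ lap B x < 0 ∧ 0 ≤ B x) ∧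
      ∀ p ∈ S, Tendsto B (𝓝[Ω \ S] p) atTop := by
  induction S, hS using Set.Finite.induction_on with
  | empty =>
    obtain ⟨C, hC⟩ := exists_nonneg_quadratic hΩ 0
    refine ⟨fun x => C - ‖x - 0‖ ^ 2, fun x hx => ⟨?_, ?_, hC x hx.1⟩, by simp⟩
    · exact contDiffAt_const.sub (contDiff_norm_sub_sq 0).contDiffAt
    · rw [lap_sub contDiffAt_const (contDiff_norm_sub_sq 0).contDiffAt, lap_const,
        lap_norm_sub_sq]
      norm_num
  | @insert a S _ _ ih =>
    obtain ⟨B, hB, hBS⟩ := ih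
    obtain ⟨C, hlog⟩ := exists_nonneg_log hΩ a
    have hsub : Ω \ insert a S ⊆ Ω \ S := Set.sdiff_subset_sdiff_right (Set.subset_insert a S)
    have hne : ∀ x ∈ Ω \ insert a S, x ≠ a := fun x hx h => hx.2 (h ▸ Set.mem_insert a S)
    refine ⟨fun x => B x + (C - Real.log (‖x - a‖ ^ 2)), fun x hx => ?_, ?_⟩
    · obtain ⟨hBreg, hBlap, hB0⟩ := hB x (hsub hx)
      have hreg := contDiffAt_log_norm_sub_sq (hne x hx)
      refine ⟨hBreg.add (contDiffAt_const.sub hreg), ?_, add_nonneg hB0 (hlog x hx.1)⟩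
      rwa [lap_add hBreg (contDiffAt_const.sub hreg), lap_sub contDiffAt_const hreg, lap_const,
        lap_log_norm_sub_sq (hne x hx), sub_zero, add_zero]
    · rintro p (rfl | hp)
      · have hatTop : Tendsto (fun x => C - Real.log (‖x - p‖ ^ 2)) (𝓝[Ω \ insert p S] p) atTop :=
          tendsto_const_nhds.add_atTop <| tendsto_neg_atBot_atTop.comp <|
            (tendsto_log_norm_sub_sq p).mono_left (nhdsWithin_mono p hne)
        refine tendsto_atTop_mono' _ ?_ hatTop
        filter_upwards [self_mem_nhdsWithin] with x hx
        exact le_add_of_nonneg_left (hB x (hsub hx)).2.2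
      · refine tendsto_atTop_mono' _ ?_ ((hBS p hp).mono_left (nhdsWithin_mono p hsub))
        filter_upwards [self_mem_nhdsWithin] with x hx
        exact le_add_of_nonneg_right (hlog x hx.1)

theorem SuperharmonicOn.nonneg (hψ : SuperharmonicOn ψ (Ω \ S)) (hΩ : IsOpen Ω)
    (hΩb : Bornology.IsBounded Ω) (hS : S.Finite)
    (hbelow : ∀ p ∈ S, ∃ m, ∀ᶠ y in 𝓝[Ω \ S] p, m ≤ ψ y)
    (hbdry : ∀ x ∈ frontier Ω \ S, ∀ ε > 0, ∀ᶠ y in 𝓝[Ω \ S] x, -ε ≤ ψ y) :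
    ∀ x ∈ Ω \ S, 0 ≤ ψ x := by
  obtain ⟨B, hB, hBS⟩ := exists_singular_barrier hΩb hS
  have hU : IsOpen (Ω \ S) := hΩ.sdiff hS.isClosed
  have perturbed : ∀ ε > 0, ∀ x ∈ Ω \ S, 0 ≤ ψ x + ε * B x := fun ε hε => by
    have hεB : ∀ x ∈ Ω \ S, ContDiffAt ℝ 2 (fun y => ε * B y) x := fun x hx =>
      contDiffAt_const.mul (hB x hx).1
    refine nonneg_of_lap_neg hU (hΩb.subset Set.sdiff_subset)
      (fun x hx => (hψ.contDiffAt x hx).add (hεB x hx)) (fun x hx => ?_) fun x hx η hη => ?_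
    · rw [lap_add (hψ.contDiffAt x hx) (hεB x hx), lap_const_mul ε (hB x hx).1]
      exact add_neg_of_nonpos_of_neg (hψ.lap_nonpos x hx) (mul_neg_of_pos_of_neg hε (hB x hx).2.1)
    · by_cases hxS : x ∈ S
      · obtain ⟨m, hm⟩ := hbelow x hxS
        filter_upwards [hm, ((hBS x hxS).const_mul_atTop hε).eventually_ge_atTop (-m)]
          with y hmy hBy
        linarith
      · have hxΩ : x ∈ frontier Ω :=
          ⟨closure_mono Set.sdiff_subset hx.1, fun hint =>
            hx.2 (hU.interior_eq.symm ▸ ⟨interior_subset hint, hxS⟩)⟩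
        filter_upwards [hbdry x ⟨hxΩ, hxS⟩ η hη, self_mem_nhdsWithin] with y hy hyU
        have := mul_nonneg hε.le (hB y hyU).2.2
        linarith
  intro x hx
  have hlim : Tendsto (fun ε => ψ x + ε * B x) (𝓝[>] 0) (𝓝 (ψ x)) := by
    have h : Continuous fun ε : ℝ => ψ x + ε * B x := by fun_prop
    simpa using (h.tendsto 0).mono_left nhdsWithin_le_nhds
  exact ge_of_tendsto hlim <| by
    filter_upwards [self_mem_nhdsWithin] with ε hε using perturbed ε hε x hx

end MinimumPrinciple

/-- The open half of the unit disc on the side of the vector `v`. -/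
def halfDisc (v : Pl) : Set Pl := {y | ‖y‖ < 1 ∧ 0 < ⟪v, y⟫}

section HalfDisc

variable {g : Pl → ℝ} {v y : Pl} {A M s : ℝ}

lemma isOpen_halfDisc (v : Pl) : IsOpen (halfDisc v) :=
  (isOpen_lt continuous_norm continuous_const).inter
    (isOpen_lt continuous_const (innerSL ℝ v).continuous)

lemma halfDisc_subset_ball (v : Pl) : halfDisc v ⊆ ball 0 1 := fun _ hy =>
  mem_ball_zero_iff.2 hy.1

lemma ne_zero_of_mem_halfDisc (hy : y ∈ halfDisc v) : y ≠ 0 := by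
  rintro rfl
  simpa using hy.2

lemma inner_le_norm_of_norm_eq_one (hv : ‖v‖ = 1) (y : Pl) : ⟪v, y⟫ ≤ ‖y‖ := by
  simpa [hv] using real_inner_le_norm v y

lemma norm_eq_one_or_inner_eq_zero_of_mem_frontier (hy : y ∈ frontier (halfDisc v)) :
    ‖y‖ = 1 ∨ ‖y‖ < 1 ∧ ⟪v, y⟫ = 0 := by
  have hclosed : IsClosed {z : Pl | ‖z‖ ≤ 1 ∧ 0 ≤ ⟪v, z⟫} :=
    (isClosed_le continuous_norm continuous_const).inter
      (isClosed_le continuous_const (innerSL ℝ v).continuous)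
  obtain ⟨hnorm, hinner⟩ : ‖y‖ ≤ 1 ∧ 0 ≤ ⟪v, y⟫ :=
    hclosed.closure_subset_iff.2 (fun z (hz : z ∈ halfDisc v) => ⟨hz.1.le, hz.2.le⟩) hy.1
  rw [(isOpen_halfDisc v).frontier_eq] at hy
  refine hnorm.eq_or_lt.imp_right fun hlt => ⟨hlt, ?_⟩
  by_contra h0
  exact hy.2 ⟨hlt, hinner.lt_of_ne' h0⟩

lemma rpow_sub_half_rpow_nonneg {t : ℝ} (hs : 0 ≤ s) (ht0 : 0 < t) (ht1 : t ≤ 1) :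
    0 ≤ t ^ s - t ^ (2 * s) / 2 := by
  have := Real.rpow_le_rpow_of_exponent_ge ht0 ht1 (show s ≤ 2 * s by linarith)
  linarith [Real.rpow_nonneg ht0.le (2 * s)]

lemma contDiffAt_inner_rpow_sub_half_rpow (hy : 0 < ⟪v, y⟫) (s : ℝ) :
    ContDiffAt ℝ 2 (fun y => ⟪v, y⟫ ^ s - ⟪v, y⟫ ^ (2 * s) / 2) y := by
  have hinner : ContDiffAt ℝ 2 (fun y => ⟪v, y⟫) y := (innerSL ℝ v).contDiff.contDiffAt
  exact (hinner.rpow_const_of_ne hy.ne').sub ((hinner.rpow_const_of_ne hy.ne').div_const 2)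

lemma lap_inner_rpow_sub_half_rpow_le (hv : ‖v‖ = 1) (hs : s ∈ Set.Ioc (0 : ℝ) 1)
    (hy : 0 < ⟪v, y⟫) (hy1 : ⟪v, y⟫ ≤ 1) :
    lap (fun y => ⟪v, y⟫ ^ s - ⟪v, y⟫ ^ (2 * s) / 2) y ≤ -(s ^ 2 * ⟪v, y⟫ ^ (2 * s - 2)) := by
  have hrpow : ∀ {t : ℝ}, 0 < t → ∀ p : ℝ, HasDerivAt (fun t => t ^ p) (p * t ^ (p - 1)) t :=
    fun ht p => Real.hasDerivAt_rpow_const (Or.inl ht.ne')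
  have h1 : ∀ᶠ t in 𝓝 ⟪v, y⟫, HasDerivAt (fun t : ℝ => t ^ s - t ^ (2 * s) / 2)
      (s * t ^ (s - 1) - 2 * s * t ^ (2 * s - 1) / 2) t := by
    filter_upwards [lt_mem_nhds hy] with t ht
    exact (hrpow ht s).sub ((hrpow ht (2 * s)).div_const 2)
  have h2 := ((hrpow hy (s - 1)).const_mul s).sub
    (((hrpow hy (2 * s - 1)).const_mul (2 * s)).div_const 2)
  have hle : s * (s - 1) * ⟪v, y⟫ ^ (s - 1 - 1) ≤ s * (s - 1) * ⟪v, y⟫ ^ (2 * s - 1 - 1) :=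
    mul_le_mul_of_nonpos_left
      (Real.rpow_le_rpow_of_exponent_ge hy hy1 (by linarith [hs.1]))
      (mul_nonpos_of_nonneg_of_nonpos hs.1.le (by linarith [hs.2]))
  rw [lap_comp_inner (φ := fun t => t ^ s - t ^ (2 * s) / 2) v h1 h2, hv,
    show 2 * s - 2 = 2 * s - 1 - 1 by ring]
  linarith

lemma superharmonicOn_halfDisc_barrier (hv : ‖v‖ = 1) (hs : s ∈ Set.Ioc (0 : ℝ) 1) (hA : 0 ≤ A)
    (hM : 0 ≤ M) (hreg : ∀ y ∈ halfDisc v, ContDiffAt ℝ 2 g y)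
    (hlap : ∀ y ∈ halfDisc v, -A * ⟪v, y⟫ ^ (2 * s - 2) ≤ lap g y) :
    SuperharmonicOn (fun y => M * ‖y - 0‖ ^ 2
      + (A + 4 * M) / s ^ 2 * (⟪v, y⟫ ^ s - ⟪v, y⟫ ^ (2 * s) / 2) - g y) (halfDisc v) := by
  set C := (A + 4 * M) / s ^ 2
  have hnorm : ∀ y : Pl, ContDiffAt ℝ 2 (fun y => M * ‖y - 0‖ ^ 2) y := fun y =>
    contDiffAt_const.mul (contDiff_norm_sub_sq 0).contDiffAt
  have hprofile : ∀ y ∈ halfDisc v,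
      ContDiffAt ℝ 2 (fun y => ⟪v, y⟫ ^ s - ⟪v, y⟫ ^ (2 * s) / 2) y := fun y hy =>
    contDiffAt_inner_rpow_sub_half_rpow hy.2 s
  refine ⟨fun y hy => ((hnorm y).add (contDiffAt_const.mul (hprofile y hy))).sub (hreg y hy),
    fun y hy => ?_⟩
  have ht1 : ⟪v, y⟫ ≤ 1 := (inner_le_norm_of_norm_eq_one hv y).trans hy.1.le
  have hpow : 1 ≤ ⟪v, y⟫ ^ (2 * s - 2) :=
    Real.one_le_rpow_of_pos_of_le_one_of_nonpos hy.2 ht1 (by linarith [hs.2])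
  have hC : C * s ^ 2 = A + 4 * M := div_mul_cancel₀ _ (pow_pos hs.1 2).ne'
  have : 0 ≤ C := by positivity
  rw [lap_sub ((hnorm y).add (contDiffAt_const.mul (hprofile y hy))) (hreg y hy),
    lap_add (hnorm y) (contDiffAt_const.mul (hprofile y hy)),
    lap_const_mul _ (contDiff_norm_sub_sq 0).contDiffAt, lap_const_mul _ (hprofile y hy),
    lap_norm_sub_sq]
  calc M * 4 + C * lap (fun y => ⟪v, y⟫ ^ s - ⟪v, y⟫ ^ (2 * s) / 2) y - lap g y
      ≤ M * 4 + C * -(s ^ 2 * ⟪v, y⟫ ^ (2 * s - 2)) - -A * ⟪v, y⟫ ^ (2 * s - 2) := by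
        gcongr
        · exact lap_inner_rpow_sub_half_rpow_le hv hs hy.2 ht1
        · exact hlap y hy
    _ = 4 * M * (1 - ⟪v, y⟫ ^ (2 * s - 2)) := by
        linear_combination -⟪v, y⟫ ^ (2 * s - 2) * hC
    _ ≤ 0 := mul_nonpos_of_nonneg_of_nonpos (by positivity) (by linarith)

theorem le_of_lap_ge_on_halfDisc (hv : ‖v‖ = 1) (hs : s ∈ Set.Ioc (0 : ℝ) 1) (hA : 0 ≤ A)
    (hM : 0 ≤ M) (hreg : ∀ y ∈ halfDisc v, ContDiffAt ℝ 2 g y)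
    (hbound : ∀ y ∈ halfDisc v, g y ≤ M)
    (hlap : ∀ y ∈ halfDisc v, -A * ⟪v, y⟫ ^ (2 * s - 2) ≤ lap g y)
    (hflat : ∀ x ∈ ball (0 : Pl) 1 \ {0}, ⟪v, x⟫ = 0 → ∀ ε > 0, ∀ᶠ y in 𝓝[halfDisc v] x, g y ≤ ε) :
    ∀ y ∈ halfDisc v, g y ≤ M * ‖y‖ ^ 2 + (A + 4 * M) / s ^ 2 * ⟪v, y⟫ ^ s := by
  have hC : 0 ≤ (A + 4 * M) / s ^ 2 := by positivity
  have hprofile : ∀ y ∈ halfDisc v, 0 ≤ ⟪v, y⟫ ^ s - ⟪v, y⟫ ^ (2 * s) / 2 := fun y hy =>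
    rpow_sub_half_rpow_nonneg hs.1.le hy.2 ((inner_le_norm_of_norm_eq_one hv y).trans hy.1.le)
  have hdiff : halfDisc v \ {0} = halfDisc v :=
    Set.sdiff_singleton_eq_self fun h => ne_zero_of_mem_halfDisc h rfl
  have hsuper := superharmonicOn_halfDisc_barrier hv hs hA hM hreg hlap
  rw [← hdiff] at hsuper
  have hpos := hsuper.nonneg (isOpen_halfDisc v) (isBounded_ball.subset (halfDisc_subset_ball v))
    (Set.finite_singleton 0) ?_ ?_
  · intro y hy
    have h := hpos y (hdiff.symm ▸ hy)
    have := mul_le_mul_of_nonneg_left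
      (sub_le_self (⟪v, y⟫ ^ s) (div_nonneg (Real.rpow_nonneg hy.2.le (2 * s)) zero_le_two)) hC
    rw [sub_zero] at h
    linarith
  · rintro p -
    refine ⟨-M, ?_⟩
    rw [hdiff]
    filter_upwards [self_mem_nhdsWithin] with y hy
    linarith [hbound y hy, mul_nonneg hC (hprofile y hy), mul_nonneg hM (sq_nonneg ‖y - 0‖)]
  · rintro x ⟨hx, hx0⟩ ε hε
    rw [hdiff]
    rcases norm_eq_one_or_inner_eq_zero_of_mem_frontier hx with hx1 | ⟨hx1, hxv⟩
    · have hcont : Continuous fun y : Pl => M * ‖y - 0‖ ^ 2 := by fun_prop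
      have hlim : ∀ᶠ y in 𝓝[halfDisc v] x, M - ε < M * ‖y - 0‖ ^ 2 :=
        ((hcont.tendsto x).mono_left nhdsWithin_le_nhds).eventually_const_lt (by simp [hx1, hε])
      filter_upwards [hlim, self_mem_nhdsWithin] with y hy hyv
      linarith [hbound y hyv, mul_nonneg hC (hprofile y hyv)]
    · filter_upwards [hflat x ⟨mem_ball_zero_iff.2 hx1, hx0⟩ hxv ε hε, self_mem_nhdsWithin]
        with y hy hyv
      linarith [mul_nonneg hC (hprofile y hyv), mul_nonneg hM (sq_nonneg ‖y - 0‖)]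

end HalfDisc

section InteriorEstimates

variable {f : Pl → ℝ} {v x y : Pl} {A F L M d s : ℝ}

theorem sub_reflection_le (hv : ‖v‖ = 1) (hs : s ∈ Set.Ioc (0 : ℝ) 1) (hM : 0 ≤ M) (hA : 0 ≤ A)
    (hreg : ∀ y ∈ ball (0 : Pl) 1 \ {0}, ContDiffAt ℝ 2 f y)
    (hbound : ∀ y ∈ ball (0 : Pl) 1 \ {0}, |f y| ≤ M)
    (hlap : ∀ y ∈ ball (0 : Pl) 1 \ {0}, |lap f y| ≤ A * ‖y‖ ^ (2 * s - 2))
    (hy : y ∈ halfDisc v) :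
    f y - f ((ℝ ∙ v)ᗮ.reflection y)
      ≤ 2 * M * ‖y‖ ^ 2 + (2 * A + 4 * (2 * M)) / s ^ 2 * ⟪v, y⟫ ^ s := by
  set R : Pl ≃ₗᵢ[ℝ] Pl := (ℝ ∙ v)ᗮ.reflection
  have hmem : ∀ z ∈ halfDisc v, z ∈ ball (0 : Pl) 1 \ {0} := fun z hz =>
    ⟨halfDisc_subset_ball v hz, ne_zero_of_mem_halfDisc hz⟩
  have hRmem : ∀ z ∈ ball (0 : Pl) 1 \ {0}, R z ∈ ball (0 : Pl) 1 \ {0} := fun z hz =>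
    ⟨by simpa using hz.1, by simpa using hz.2⟩
  have hregR : ∀ z ∈ ball (0 : Pl) 1 \ {0}, ContDiffAt ℝ 2 (fun w => f (R w)) z := fun z hz =>
    (hreg _ (hRmem z hz)).comp z R.contDiff.contDiffAt
  have hlapR : ∀ z ∈ ball (0 : Pl) 1 \ {0}, lap (fun w => f (R w)) z = lap f (R z) := by
    intro z hz
    have hz' : ContDiffAt ℝ 2 f (0 + (1 : ℝ) • R z) := by simpa using hreg _ (hRmem z hz)
    simpa using lap_comp_similarity 0 1 R hz'
  refine le_of_lap_ge_on_halfDisc (g := fun y => f y - f (R y)) hv hs (by positivity)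
    (by positivity) (fun z hz => (hreg z (hmem z hz)).sub (hregR z (hmem z hz)))
    (fun z hz => ?_) (fun z hz => ?_) (fun z hz hvz ε hε => ?_) y hy
  · have h1 := abs_le.1 (hbound z (hmem z hz))
    have h2 := abs_le.1 (hbound _ (hRmem z (hmem z hz)))
    linarith
  · have h1 := abs_le.1 (hlap z (hmem z hz))
    have h2 := abs_le.1 (hlap _ (hRmem z (hmem z hz)))
    rw [R.norm_map] at h2
    have hmono : ‖z‖ ^ (2 * s - 2) ≤ ⟪v, z⟫ ^ (2 * s - 2) :=
      Real.rpow_le_rpow_of_nonpos hz.2 (inner_le_norm_of_norm_eq_one hv z) (by linarith [hs.2])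
    rw [lap_sub (hreg z (hmem z hz)) (hregR z (hmem z hz)), hlapR z (hmem z hz)]
    linarith [mul_le_mul_of_nonneg_left hmono hA]
  · have hfix : R z = z := Submodule.reflection_mem_subspace_eq_self
      (Submodule.mem_orthogonal_singleton_iff_inner_right.2 hvz)
    have hcont : ContinuousAt (fun y => f y - f (R y)) z :=
      (hreg z hz).continuousAt.sub (hregR z hz).continuousAt
    have hlt : f z - f (R z) < ε := by simpa [hfix] using hε
    filter_upwards [hcont.continuousWithinAt.eventually_lt_const hlt] with y hy using hy.le

lemma sub_reflect_through_center_le (hv : ‖v‖ = 1) (hd : 0 < d) {τ : ℝ}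
    (hτ : τ ∈ Set.Ioo (0 : ℝ) 1) (hreg : ∀ y ∈ ball x d, ContDiffAt ℝ 2 f y)
    (hbound : ∀ y ∈ ball x d, |f y| ≤ M) (hlap : ∀ y ∈ ball x d, |lap f y| ≤ F) :
    f (x + τ • d • v) - f (x - τ • d • v)
      ≤ (2 * M * τ + (2 * (F * d ^ 2) + 4 * (2 * M))) * τ := by
  have hball : ∀ z ∈ ball (0 : Pl) 1, x + d • z ∈ ball x d := fun z hz => by
    have : d * ‖z‖ < d := mul_lt_of_lt_one_right hd (mem_ball_zero_iff.1 hz)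
    simpa [norm_smul, abs_of_pos hd] using this
  have hM : 0 ≤ M := (abs_nonneg _).trans (hbound x (mem_ball_self hd))
  have hF : 0 ≤ F := (abs_nonneg _).trans (hlap x (mem_ball_self hd))
  have hT : ContDiff ℝ 2 fun z => x + d • z := contDiff_const.add (contDiff_id.const_smul d)
  have hscale : ∀ z ∈ ball (0 : Pl) 1, lap (fun z => f (x + d • z)) z
      = d ^ 2 * lap f (x + d • z) := fun z hz =>
    lap_comp_similarity x d (LinearIsometryEquiv.refl ℝ Pl) (hreg _ (hball z hz))
  have hmem : τ • v ∈ halfDisc v := by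
    simp [halfDisc, norm_smul, hv, abs_of_pos hτ.1, hτ.1, hτ.2, inner_smul_right]
  have h := sub_reflection_le (f := fun z => f (x + d • z)) (A := F * d ^ 2) (s := 1) hv
    (by simp) hM (by positivity) (fun z hz => (hreg _ (hball z hz.1)).comp z hT.contDiffAt)
    (fun z hz => hbound _ (hball z hz.1)) (fun z hz => ?_) hmem
  · rw [map_smul, Submodule.reflection_orthogonalComplement_singleton_eq_neg, smul_neg, smul_neg,
      ← sub_eq_add_neg, smul_comm d τ, norm_smul, inner_smul_right, real_inner_self_eq_norm_sq,
      hv, Real.norm_eq_abs, mul_one, sq_abs, Real.rpow_one] at h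
    linarith
  · rw [hscale z hz.1, abs_mul, abs_of_nonneg (sq_nonneg d)]
    norm_num
    rw [mul_comm]
    gcongr
    exact hlap _ (hball z hz.1)

lemma hasDerivAt_sub_through_center {f' : Pl →L[ℝ] ℝ} (hf : HasFDerivAt f f' x) (w : Pl) :
    HasDerivAt (fun τ : ℝ => f (x + τ • w) - f (x - τ • w)) (2 * f' w) 0 := by
  have hplus : HasDerivAt (fun τ : ℝ => x + τ • w) w 0 := by
    simpa using ((hasDerivAt_id (0 : ℝ)).smul_const w).const_add x
  have hminus : HasDerivAt (fun τ : ℝ => x - τ • w) (-w) 0 := by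
    simpa using ((hasDerivAt_id (0 : ℝ)).smul_const w).const_sub x
  have h := (HasFDerivAt.comp_hasDerivAt (0 : ℝ) (by simpa using hf) hplus).sub
    (HasFDerivAt.comp_hasDerivAt (0 : ℝ) (by simpa using hf) hminus)
  rwa [map_neg, sub_neg_eq_add, ← two_mul] at h

theorem norm_fderiv_le_of_lap_bound (hd : 0 < d) (hreg : ∀ y ∈ ball x d, ContDiffAt ℝ 2 f y)
    (hbound : ∀ y ∈ ball x d, |f y| ≤ M) (hlap : ∀ y ∈ ball x d, |lap f y| ≤ F) :
    ‖fderiv ℝ f x‖ ≤ F * d + 4 * M / d := by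
  have hM : 0 ≤ M := (abs_nonneg _).trans (hbound x (mem_ball_self hd))
  have hF : 0 ≤ F := (abs_nonneg _).trans (hlap x (mem_ball_self hd))
  have hunit : ∀ v : Pl, ‖v‖ = 1 → fderiv ℝ f x v ≤ F * d + 4 * M / d := fun v hv => by
    have hderiv := hasDerivAt_sub_through_center
      ((hreg x (mem_ball_self hd)).differentiableAt two_ne_zero).hasFDerivAt (d • v)
    have hslope := hderiv.tendsto_slope_zero_right
    have hright : Tendsto (fun τ : ℝ => 2 * M * τ + (2 * (F * d ^ 2) + 4 * (2 * M))) (𝓝[>] 0)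
        (𝓝 (2 * M * 0 + (2 * (F * d ^ 2) + 4 * (2 * M)))) :=
      (show Continuous fun τ : ℝ => 2 * M * τ + (2 * (F * d ^ 2) + 4 * (2 * M)) by
        fun_prop).continuousWithinAt
    have hle := le_of_tendsto_of_tendsto hslope hright <| by
      filter_upwards [Ioo_mem_nhdsGT zero_lt_one] with τ hτ
      have := sub_reflect_through_center_le hv hd hτ hreg hbound hlap
      simpa [inv_mul_le_iff₀ hτ.1, mul_comm τ] using this
    have hscaled : d * fderiv ℝ f x v ≤ d * (F * d + 4 * M / d) := by
      rw [map_smul, smul_eq_mul] at hle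
      calc d * fderiv ℝ f x v ≤ F * d ^ 2 + 4 * M := by linarith
        _ = d * (F * d + 4 * M / d) := by field_simp
    exact le_of_mul_le_mul_left hscaled hd
  refine ContinuousLinearMap.opNorm_le_of_unit_norm (by positivity) fun v hv => ?_
  refine abs_le.2 ⟨?_, hunit v hv⟩
  have := hunit (-v) (by simpa using hv)
  rw [map_neg] at this
  linarith

lemma exists_reflection_eq (hxy : ‖x‖ = ‖y‖) (hne : x ≠ y) :
    ∃ v : Pl, ‖v‖ = 1 ∧ 0 < ⟪v, x⟫ ∧ (ℝ ∙ v)ᗮ.reflection x = y := by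
  have hpos : 0 < ‖x - y‖ := norm_pos_iff.2 (sub_ne_zero.2 hne)
  refine ⟨‖x - y‖⁻¹ • (x - y), by simp [norm_smul, hpos.ne'], ?_, ?_⟩
  · have h := norm_sub_sq_real x y
    rw [inner_smul_left, inner_sub_left, real_inner_self_eq_norm_sq, real_inner_comm]
    rw [← hxy] at h
    exact mul_pos (inv_pos.2 hpos) (by nlinarith [pow_pos hpos 2])
  · have hspan : (ℝ ∙ (‖x - y‖⁻¹ • (x - y))) = ℝ ∙ (x - y) :=
      Submodule.span_singleton_smul_eq (inv_pos.2 hpos).ne'.isUnit _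
    simp only [hspan]
    exact Submodule.reflection_sub hxy

lemma sub_le_of_norm_eq (hs : s ∈ Set.Ioc (0 : ℝ) 1) (hM : 0 ≤ M) (hA : 0 ≤ A)
    (hreg : ∀ y ∈ ball (0 : Pl) 1 \ {0}, ContDiffAt ℝ 2 f y)
    (hbound : ∀ y ∈ ball (0 : Pl) 1 \ {0}, |f y| ≤ M)
    (hlap : ∀ y ∈ ball (0 : Pl) 1 \ {0}, |lap f y| ≤ A * ‖y‖ ^ (2 * s - 2))
    (hx : x ∈ ball (0 : Pl) 1) (hxy : ‖x‖ = ‖y‖) :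
    f x - f y ≤ (2 * M + (2 * A + 4 * (2 * M)) / s ^ 2) * ‖x‖ ^ s := by
  have hx1 : ‖x‖ < 1 := mem_ball_zero_iff.1 hx
  have hs0 := hs.1
  rcases eq_or_ne x y with rfl | hne
  · rw [sub_self]
    positivity
  obtain ⟨v, hv, hvx, hswap⟩ := exists_reflection_eq hxy hne
  have h := sub_reflection_le hv hs hM hA hreg hbound hlap ⟨hx1, hvx⟩
  rw [hswap] at h
  have hx0 : 0 < ‖x‖ := hvx.trans_le (inner_le_norm_of_norm_eq_one hv x)
  have hsq : ‖x‖ ^ 2 ≤ ‖x‖ ^ s := by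
    rw [← Real.rpow_two]
    exact Real.rpow_le_rpow_of_exponent_ge hx0 hx1.le (by linarith [hs.2])
  have hinner : ⟪v, x⟫ ^ s ≤ ‖x‖ ^ s :=
    Real.rpow_le_rpow hvx.le (inner_le_norm_of_norm_eq_one hv x) hs0.le
  calc f x - f y ≤ 2 * M * ‖x‖ ^ 2 + (2 * A + 4 * (2 * M)) / s ^ 2 * ⟪v, x⟫ ^ s := h
    _ ≤ 2 * M * ‖x‖ ^ s + (2 * A + 4 * (2 * M)) / s ^ 2 * ‖x‖ ^ s := by gcongr
    _ = (2 * M + (2 * A + 4 * (2 * M)) / s ^ 2) * ‖x‖ ^ s := by ring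

lemma norm_sq_rpow (y : Pl) (p : ℝ) : (‖y‖ ^ 2) ^ p = ‖y‖ ^ (2 * p) := by
  rw [Real.rpow_mul (norm_nonneg y), Real.rpow_two]

lemma contDiffAt_const_sub_norm_sq_rpow (b B : ℝ) (hy : y ≠ 0) :
    ContDiffAt ℝ 2 (fun y : Pl => b - B * (‖y - 0‖ ^ 2) ^ s) y :=
  contDiffAt_const.sub (contDiffAt_const.mul (contDiffAt_norm_sub_sq_rpow hy s))

lemma lap_const_sub_norm_sq_rpow (b B : ℝ) (hy : y ≠ 0) :
    lap (fun y => b - B * (‖y - 0‖ ^ 2) ^ s) y = -(B * (4 * s ^ 2) * ‖y‖ ^ (2 * s - 2)) := by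
  have hpow := contDiffAt_norm_sub_sq_rpow hy s
  rw [lap_sub contDiffAt_const (contDiffAt_const.mul hpow), lap_const, lap_const_mul B hpow,
    lap_norm_sub_sq_rpow hy, sub_zero, norm_sq_rpow]
  ring_nf

lemma le_of_le_on_sphere {m r : ℝ} (hs : 0 < s) (hA : 0 ≤ A)
    (hreg : ∀ y ∈ closedBall (0 : Pl) r \ {0}, ContDiffAt ℝ 2 f y)
    (hbound : ∀ y ∈ closedBall (0 : Pl) r \ {0}, f y ≤ M)
    (hlap : ∀ y ∈ closedBall (0 : Pl) r \ {0}, -(A * ‖y‖ ^ (2 * s - 2)) ≤ lap f y)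
    (hsphere : ∀ y ∈ sphere (0 : Pl) r, f y ≤ m) :
    ∀ y ∈ ball (0 : Pl) r \ {0}, f y ≤ m + A / (4 * s ^ 2) * r ^ (2 * s) := by
  set B := A / (4 * s ^ 2)
  have hB : B * (4 * s ^ 2) = A := div_mul_cancel₀ _ (by positivity)
  have hB0 : 0 ≤ B := by positivity
  set V : Pl → ℝ := fun y => m + B * r ^ (2 * s) - B * (‖y - 0‖ ^ 2) ^ s with hV
  have hVreg : ∀ y ≠ 0, ContDiffAt ℝ 2 V y := fun y hy => contDiffAt_const_sub_norm_sq_rpow _ B hy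
  have hsub : ball (0 : Pl) r \ {0} ⊆ closedBall 0 r \ {0} :=
    Set.sdiff_subset_sdiff_left ball_subset_closedBall
  have hVle : ∀ y ∈ ball (0 : Pl) r, m ≤ V y ∧ V y ≤ m + B * r ^ (2 * s) := fun y hy => by
    have hyr : ‖y‖ ^ (2 * s) ≤ r ^ (2 * s) :=
      Real.rpow_le_rpow (norm_nonneg y) (mem_ball_zero_iff.1 hy).le (by positivity)
    simp only [hV, sub_zero, norm_sq_rpow]
    constructor
    · linarith [mul_le_mul_of_nonneg_left hyr hB0]
    · exact sub_le_self _ (by positivity)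
  have hsuper : SuperharmonicOn (fun y => V y - f y) (ball (0 : Pl) r \ {0}) :=
    ⟨fun y hy => (hVreg y hy.2).sub (hreg y (hsub hy)), fun y hy => by
      rw [lap_sub (hVreg y hy.2) (hreg y (hsub hy)), lap_const_sub_norm_sq_rpow _ B hy.2, hB]
      linarith [hlap y (hsub hy)]⟩
  have hpos := hsuper.nonneg isOpen_ball isBounded_ball (Set.finite_singleton 0) ?_ ?_
  · intro y hy
    linarith [hpos y hy, (hVle y hy.1).2]
  · rintro p -
    refine ⟨m - M, ?_⟩
    filter_upwards [self_mem_nhdsWithin] with y hy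
    linarith [hbound y (hsub hy), (hVle y hy.1).1]
  · rintro x ⟨hx, hx0⟩ ε hε
    have hxr : x ∈ sphere (0 : Pl) r := frontier_ball_subset_sphere hx
    have hx_norm : ‖x‖ = r := mem_sphere_zero_iff_norm.1 hxr
    have hcont : ContinuousAt (fun y => V y - f y) x :=
      (hVreg x hx0).continuousAt.sub (hreg x ⟨sphere_subset_closedBall hxr, hx0⟩).continuousAt
    have hVx : V x = m := by simp [hV, norm_sq_rpow, hx_norm]
    have hgt : -ε < V x - f x := by linarith [hsphere x hxr]
    filter_upwards [hcont.continuousWithinAt.eventually_const_lt hgt] with y hy using hy.le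

lemma limit_sub_le_rpow (hs : s ∈ Set.Ioc (0 : ℝ) 1) (hM : 0 ≤ M) (hA : 0 ≤ A)
    (hreg : ∀ y ∈ ball (0 : Pl) 1 \ {0}, ContDiffAt ℝ 2 f y)
    (hbound : ∀ y ∈ ball (0 : Pl) 1 \ {0}, |f y| ≤ M)
    (hlap : ∀ y ∈ ball (0 : Pl) 1 \ {0}, |lap f y| ≤ A * ‖y‖ ^ (2 * s - 2))
    (hlim : Tendsto f (𝓝[≠] 0) (𝓝 L)) :
    ∀ y ∈ ball (0 : Pl) 1 \ {0}, L - f y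
      ≤ (2 * M + (2 * A + 4 * (2 * M)) / s ^ 2 + A / (4 * s ^ 2)) * ‖y‖ ^ s := by
  intro y hy
  have hy1 : ‖y‖ < 1 := mem_ball_zero_iff.1 hy.1
  have hy0 : 0 < ‖y‖ := norm_pos_iff.2 hy.2
  have hsub : closedBall (0 : Pl) ‖y‖ \ {0} ⊆ ball 0 1 \ {0} :=
    Set.sdiff_subset_sdiff_left (closedBall_subset_ball hy1)
  set K₀ := 2 * M + (2 * A + 4 * (2 * M)) / s ^ 2
  have hsphere : ∀ z ∈ sphere (0 : Pl) ‖y‖, f z ≤ f y + K₀ * ‖y‖ ^ s := fun z hz => by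
    have hzy : ‖z‖ = ‖y‖ := mem_sphere_zero_iff_norm.1 hz
    have h := sub_le_of_norm_eq hs hM hA hreg hbound hlap (x := z)
      (mem_ball_zero_iff.2 (hzy.trans_lt hy1)) hzy
    rw [hzy] at h
    linarith
  have hinside := le_of_le_on_sphere hs.1 hA (fun z hz => hreg z (hsub hz))
    (fun z hz => (abs_le.1 (hbound z (hsub hz))).2) (fun z hz => (abs_le.1 (hlap z (hsub hz))).1)
    hsphere
  have hL : L ≤ f y + K₀ * ‖y‖ ^ s + A / (4 * s ^ 2) * ‖y‖ ^ (2 * s) := by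
    refine le_of_tendsto hlim ?_
    filter_upwards [self_mem_nhdsWithin, nhdsWithin_le_nhds (ball_mem_nhds (0 : Pl) hy0)]
      with z hz0 hz using hinside z ⟨hz, hz0⟩
  have hpow : A / (4 * s ^ 2) * ‖y‖ ^ (2 * s) ≤ A / (4 * s ^ 2) * ‖y‖ ^ s :=
    mul_le_mul_of_nonneg_left
      (Real.rpow_le_rpow_of_exponent_ge hy0 hy1.le (by linarith [hs.1])) (by positivity)
  linarith

theorem exists_abs_sub_limit_le_rpow (hs : s ∈ Set.Ioc (0 : ℝ) 1) (hM : 0 ≤ M) (hA : 0 ≤ A)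
    (hreg : ∀ y ∈ ball (0 : Pl) 1 \ {0}, ContDiffAt ℝ 2 f y)
    (hbound : ∀ y ∈ ball (0 : Pl) 1 \ {0}, |f y| ≤ M)
    (hlap : ∀ y ∈ ball (0 : Pl) 1 \ {0}, |lap f y| ≤ A * ‖y‖ ^ (2 * s - 2))
    (hlim : Tendsto f (𝓝[≠] 0) (𝓝 L)) :
    ∃ K, ∀ y ∈ ball (0 : Pl) 1 \ {0}, |f y - L| ≤ K * ‖y‖ ^ s := by
  refine ⟨2 * M + (2 * A + 4 * (2 * M)) / s ^ 2 + A / (4 * s ^ 2), fun y hy => abs_le.2 ⟨?_, ?_⟩⟩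
  · linarith [limit_sub_le_rpow hs hM hA hreg hbound hlap hlim y hy]
  · have h := limit_sub_le_rpow hs hM hA (fun z hz => (hreg z hz).neg)
      (fun z hz => by simpa using hbound z hz)
      (fun z hz => by simpa [lap_neg (hreg z hz)] using hlap z hz) hlim.neg y hy
    linarith

end InteriorEstimates

section PointEstimates

open EuclideanGeometry

variable {f : Pl → ℝ} {c : Pl} {A L s : ℝ}

lemma norm_sub_mem_Icc_of_mem_ball {y z : Pl} (hz : z ∈ ball y (‖y - c‖ / 2)) :
    ‖z - c‖ ∈ Set.Icc (1 / 2 * ‖y - c‖) (3 / 2 * ‖y - c‖) := by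
  rw [mem_ball, dist_eq_norm] at hz
  have htri := norm_sub_le_norm_sub_add_norm_sub z y c
  have htri' := norm_sub_le_norm_sub_add_norm_sub y z c
  rw [norm_sub_rev y z] at htri'
  constructor <;> linarith

lemma eventually_forall_ball_half_of_eventually_nhdsNE {p : Pl → Prop}
    (hp : ∀ᶠ z in 𝓝[≠] c, p z) : ∀ᶠ y in 𝓝[≠] c, ∀ z ∈ ball y (‖y - c‖ / 2), p z := by
  obtain ⟨R, hR, hpR⟩ := Metric.mem_nhdsWithin_iff.1 hp
  filter_upwards [self_mem_nhdsWithin, nhdsWithin_le_nhds (ball_mem_nhds c (half_pos hR))]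
    with y hyc hyR z hz
  obtain ⟨hlow, hhigh⟩ := norm_sub_mem_Icc_of_mem_ball hz
  rw [mem_ball, dist_eq_norm] at hyR
  have : 0 < ‖y - c‖ := norm_pos_iff.2 (sub_ne_zero.2 hyc)
  refine hpR ⟨?_, sub_ne_zero.1 (norm_pos_iff.1 (by linarith))⟩
  rw [mem_ball, dist_eq_norm]
  linarith

lemma eventually_forall_ball_half_of_eventually_cobounded {p : Pl → Prop}
    (hp : ∀ᶠ z in Bornology.cobounded Pl, p z) :
    ∀ᶠ y in Bornology.cobounded Pl, ∀ z ∈ ball y (‖y‖ / 2), p z := by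
  obtain ⟨R, -, hR⟩ := hasBasis_cobounded_norm.eventually_iff.1 hp
  filter_upwards [tendsto_norm_cobounded_atTop.eventually_ge_atTop (2 * R)] with y hy z hz
  refine hR ?_
  rw [mem_ball, dist_comm, dist_eq_norm] at hz
  have := norm_sub_norm_le y z
  rw [Set.mem_ofPred_eq]
  linarith

lemma nonneg_of_eventually_abs_le_rpow {g : Pl → ℝ} {p : ℝ}
    (hg : ∀ᶠ y in 𝓝[≠] c, |g y| ≤ A * ‖y - c‖ ^ p) : 0 ≤ A := by
  obtain ⟨y, hy, hyc⟩ := (hg.and self_mem_nhdsWithin).exists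
  exact nonneg_of_mul_nonneg_left ((abs_nonneg _).trans hy)
    (Real.rpow_pos_of_pos (norm_pos_iff.2 (sub_ne_zero.2 hyc)) p)

lemma abs_lap_rescale_le {R : ℝ} (hR : 0 < R) {y : Pl} (hreg : ContDiffAt ℝ 2 f (c + R • y))
    (hlap : |lap f (c + R • y)| ≤ A * ‖c + R • y - c‖ ^ (2 * s - 2)) :
    |lap (fun z => f (c + R • z)) y| ≤ A * R ^ (2 * s) * ‖y‖ ^ (2 * s - 2) := by
  have h : lap (fun z => f (c + R • z)) y = R ^ 2 * lap f (c + R • y) :=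
    lap_comp_similarity c R (LinearIsometryEquiv.refl ℝ Pl) hreg
  rw [add_sub_cancel_left, norm_smul, Real.norm_of_nonneg hR.le,
    Real.mul_rpow hR.le (norm_nonneg y)] at hlap
  rw [h, abs_mul, abs_of_pos (pow_pos hR 2)]
  calc R ^ 2 * |lap f (c + R • y)| ≤ R ^ 2 * (A * (R ^ (2 * s - 2) * ‖y‖ ^ (2 * s - 2))) := by
        gcongr
    _ = A * R ^ (2 * s) * ‖y‖ ^ (2 * s - 2) := by
        rw [Real.rpow_sub hR, Real.rpow_two]
        field_simp

theorem exists_eventually_abs_sub_limit_le_rpow (hs : s ∈ Set.Ioc (0 : ℝ) 1)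
    (hreg : ∀ᶠ y in 𝓝[≠] c, ContDiffAt ℝ 2 f y)
    (hlap : ∀ᶠ y in 𝓝[≠] c, |lap f y| ≤ A * ‖y - c‖ ^ (2 * s - 2))
    (hlim : Tendsto f (𝓝[≠] c) (𝓝 L)) :
    ∃ K, ∀ᶠ y in 𝓝[≠] c, |f y - L| ≤ K * ‖y - c‖ ^ s := by
  have hA := nonneg_of_eventually_abs_le_rpow hlap
  have hbound : ∀ᶠ y in 𝓝[≠] c, |f y| ≤ |L| + 1 := hlim.abs.eventually_le_const (lt_add_one _)
  obtain ⟨R, hR, hball⟩ := Metric.mem_nhdsWithin_iff.1 ((hreg.and hlap).and hbound)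
  have hmem : ∀ y ∈ ball (0 : Pl) 1 \ {0}, c + R • y ∈ ball c R ∩ {c}ᶜ := fun y hy => by
    refine ⟨?_, by simpa [hR.ne'] using hy.2⟩
    simpa [norm_smul, abs_of_pos hR] using mul_lt_mul_of_pos_left (mem_ball_zero_iff.1 hy.1) hR
  have hcont : ContDiff ℝ 2 fun y : Pl => c + R • y := by fun_prop
  have hlim' : Tendsto (fun y : Pl => f (c + R • y)) (𝓝[≠] 0) (𝓝 L) := by
    refine hlim.comp (tendsto_nhdsWithin_iff.2 ⟨?_, ?_⟩)
    · simpa using (hcont.continuous.tendsto 0).mono_left nhdsWithin_le_nhds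
    · filter_upwards [self_mem_nhdsWithin] with y hy
      simpa [hR.ne'] using hy
  obtain ⟨K, hK⟩ := exists_abs_sub_limit_le_rpow (f := fun y => f (c + R • y)) hs
    (M := |L| + 1) (A := A * R ^ (2 * s)) (by positivity) (by positivity)
    (fun y hy => (hball (hmem y hy)).1.1.comp y hcont.contDiffAt)
    (fun y hy => (hball (hmem y hy)).2)
    (fun y hy => abs_lap_rescale_le hR (hball (hmem y hy)).1.1 (hball (hmem y hy)).1.2) hlim'
  refine ⟨K * R⁻¹ ^ s, ?_⟩
  filter_upwards [self_mem_nhdsWithin, nhdsWithin_le_nhds (ball_mem_nhds c hR)] with y hyc hyR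
  have hz : R⁻¹ • (y - c) ∈ ball (0 : Pl) 1 \ {0} := by
    refine ⟨?_, by simpa [hR.ne', sub_eq_zero] using hyc⟩
    rw [mem_ball_zero_iff, norm_smul, norm_inv, Real.norm_of_nonneg hR.le, ← dist_eq_norm]
    exact (inv_mul_lt_one₀ hR).2 hyR
  have h := hK _ hz
  rwa [smul_inv_smul₀ hR.ne', add_sub_cancel, norm_smul, norm_inv, Real.norm_of_nonneg hR.le,
    Real.mul_rpow (by positivity) (norm_nonneg _), ← mul_assoc] at h

theorem exists_eventually_norm_fderiv_le_rpow (hs : s ∈ Set.Ioc (0 : ℝ) 1)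
    (hreg : ∀ᶠ y in 𝓝[≠] c, ContDiffAt ℝ 2 f y)
    (hlap : ∀ᶠ y in 𝓝[≠] c, |lap f y| ≤ A * ‖y - c‖ ^ (2 * s - 2))
    (hlim : Tendsto f (𝓝[≠] c) (𝓝 L)) :
    ∃ K, ∀ᶠ y in 𝓝[≠] c, ‖fderiv ℝ f y‖ ≤ K * ‖y - c‖ ^ (s - 1) := by
  have hA := nonneg_of_eventually_abs_le_rpow hlap
  obtain ⟨K, hK⟩ := exists_eventually_abs_sub_limit_le_rpow hs hreg hlap hlim
  have hK0 := nonneg_of_eventually_abs_le_rpow hK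
  refine ⟨A * (1 / 2) ^ (2 * s - 1) + 8 * (K * (3 / 2) ^ s), ?_⟩
  filter_upwards [eventually_forall_ball_half_of_eventually_nhdsNE ((hreg.and hlap).and hK),
    self_mem_nhdsWithin, nhdsWithin_le_nhds (ball_mem_nhds c one_pos)] with y hy hyc hy1
  set r := ‖y - c‖
  have hr : 0 < r := norm_pos_iff.2 (sub_ne_zero.2 hyc)
  have hr1 : r ≤ 1 := (mem_ball_iff_norm.1 hy1).le
  have hcomparable : ∀ z ∈ ball y (r / 2), ‖z - c‖ ∈ Set.Icc (1 / 2 * r) (3 / 2 * r) :=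
    fun z hz => norm_sub_mem_Icc_of_mem_ball hz
  have hgrad := norm_fderiv_le_of_lap_bound (f := fun z => f z - L) (half_pos hr)
    (M := K * (3 / 2 * r) ^ s) (F := A * (1 / 2 * r) ^ (2 * s - 2))
    (fun z hz => (hy z hz).1.1.sub contDiffAt_const) (fun z hz => ?_) (fun z hz => ?_)
  · rw [fderiv_sub_const] at hgrad
    have hpow : r ^ (2 * s - 1) ≤ r ^ (s - 1) :=
      Real.rpow_le_rpow_of_exponent_ge hr hr1 (by linarith [hs.1])
    calc ‖fderiv ℝ f y‖
        ≤ A * (1 / 2 * r) ^ (2 * s - 2) * (r / 2) + 4 * (K * (3 / 2 * r) ^ s) / (r / 2) := hgrad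
      _ = A * (1 / 2) ^ (2 * s - 1) * r ^ (2 * s - 1)
          + 8 * (K * (3 / 2) ^ s) * r ^ (s - 1) := by
        rw [show 2 * s - 1 = 2 * s - 2 + 1 by ring, Real.mul_rpow (by norm_num) hr.le,
          Real.mul_rpow (by norm_num) hr.le, Real.rpow_add_one (by norm_num),
          Real.rpow_add_one hr.ne', Real.rpow_sub_one hr.ne']
        ring
      _ ≤ A * (1 / 2) ^ (2 * s - 1) * r ^ (s - 1)
          + 8 * (K * (3 / 2) ^ s) * r ^ (s - 1) := by gcongr
      _ = _ := by ring
  · calc |f z - L| ≤ K * ‖z - c‖ ^ s := (hy z hz).2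
      _ ≤ K * (3 / 2 * r) ^ s := by
        gcongr
        · exact hs.1.le
        · exact (hcomparable z hz).2
  · calc |lap (fun z => f z - L) z| = |lap f z| := by
          rw [lap_sub (hy z hz).1.1 contDiffAt_const, lap_const, sub_zero]
      _ ≤ A * ‖z - c‖ ^ (2 * s - 2) := (hy z hz).1.2
      _ ≤ A * (1 / 2 * r) ^ (2 * s - 2) := by
        refine mul_le_mul_of_nonneg_left ?_ hA
        exact Real.rpow_le_rpow_of_nonpos (by positivity) (hcomparable z hz).1
          (by linarith [hs.2])

lemma nonneg_of_eventually_abs_le_div {g : Pl → ℝ} {n : ℕ}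
    (hg : ∀ᶠ x in Bornology.cobounded Pl, |g x| ≤ A / ‖x‖ ^ n) : 0 ≤ A := by
  obtain ⟨x, hx, hx0⟩ := (hg.and (tendsto_norm_cobounded_atTop.eventually_gt_atTop 0)).exists
  exact nonneg_of_mul_nonneg_left ((abs_nonneg _).trans hx) (inv_pos.2 (pow_pos hx0 n))

lemma tendsto_inversion_nhdsNE_zero :
    Tendsto (inversion (0 : Pl) 1) (𝓝[≠] 0) (Bornology.cobounded Pl) := by
  rw [← tendsto_norm_atTop_iff_cobounded]
  simp only [norm_inversion_zero_one]
  exact tendsto_inv_nhdsGT_zero.comp tendsto_norm_nhdsNE_zero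

lemma tendsto_inversion_cobounded :
    Tendsto (inversion (0 : Pl) 1) (Bornology.cobounded Pl) (𝓝[≠] 0) := by
  refine tendsto_nhdsWithin_iff.2 ⟨?_, ?_⟩
  · rw [tendsto_zero_iff_norm_tendsto_zero]
    simp only [norm_inversion_zero_one]
    exact tendsto_inv_atTop_zero.comp tendsto_norm_cobounded_atTop
  · filter_upwards [tendsto_norm_cobounded_atTop.eventually_gt_atTop 0] with x hx
    rw [Set.mem_compl_singleton_iff, ← norm_pos_iff, norm_inversion_zero_one]
    exact inv_pos.2 hx

theorem exists_eventually_abs_sub_limit_le_inv_norm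
    (hreg : ∀ᶠ x in Bornology.cobounded Pl, ContDiffAt ℝ 2 f x)
    (hlap : ∀ᶠ x in Bornology.cobounded Pl, |lap f x| ≤ A / ‖x‖ ^ 4)
    (hlim : Tendsto f (Bornology.cobounded Pl) (𝓝 L)) :
    ∃ K, ∀ᶠ x in Bornology.cobounded Pl, |f x - L| ≤ K / ‖x‖ := by
  suffices h : ∃ K, ∀ᶠ y in 𝓝[≠] (0 : Pl),
      |f (inversion 0 1 y) - L| ≤ K * ‖y - 0‖ ^ (1 : ℝ) by
    obtain ⟨K, hK⟩ := h
    refine ⟨K, ?_⟩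
    filter_upwards [tendsto_inversion_cobounded.eventually hK] with x hx
    simpa [norm_inversion_zero_one, inversion_inversion, div_eq_mul_inv] using hx
  refine exists_eventually_abs_sub_limit_le_rpow (A := A) ⟨one_pos, le_rfl⟩ ?_ ?_
    (hlim.comp tendsto_inversion_nhdsNE_zero)
  · filter_upwards [tendsto_inversion_nhdsNE_zero.eventually hreg, self_mem_nhdsWithin]
      with y hy hy0
    exact hy.comp y (contDiffAt_inversion_zero_one hy0)
  · filter_upwards [tendsto_inversion_nhdsNE_zero.eventually hreg,
      tendsto_inversion_nhdsNE_zero.eventually hlap, self_mem_nhdsWithin] with y hy hle hy0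
    have hy0' : 0 < ‖y‖ := norm_pos_iff.2 hy0
    rw [norm_inversion_zero_one] at hle
    rw [lap_comp_inversion hy0 hy, abs_mul, abs_of_pos (by positivity)]
    calc (‖y‖ ^ 4)⁻¹ * |lap f (inversion 0 1 y)| ≤ (‖y‖ ^ 4)⁻¹ * (A / ‖y‖⁻¹ ^ 4) := by gcongr
      _ = A * ‖y - 0‖ ^ (2 * (1 : ℝ) - 2) := by
        norm_num
        field_simp

theorem exists_eventually_norm_fderiv_le_inv_norm_sq
    (hreg : ∀ᶠ x in Bornology.cobounded Pl, ContDiffAt ℝ 2 f x)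
    (hlap : ∀ᶠ x in Bornology.cobounded Pl, |lap f x| ≤ A / ‖x‖ ^ 4)
    (hlim : Tendsto f (Bornology.cobounded Pl) (𝓝 L)) :
    ∃ K, ∀ᶠ x in Bornology.cobounded Pl, ‖fderiv ℝ f x‖ ≤ K / ‖x‖ ^ 2 := by
  have hA := nonneg_of_eventually_abs_le_div hlap
  obtain ⟨K, hK⟩ := exists_eventually_abs_sub_limit_le_inv_norm hreg hlap hlim
  have hK0 : 0 ≤ K := nonneg_of_eventually_abs_le_div (n := 1) (by simpa only [pow_one] using hK)
  refine ⟨8 * A + 16 * K, ?_⟩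
  filter_upwards [eventually_forall_ball_half_of_eventually_cobounded ((hreg.and hlap).and hK),
    tendsto_norm_cobounded_atTop.eventually_ge_atTop 1] with x hx hx1
  set r := ‖x‖
  have hr : 0 < r := one_pos.trans_le hx1
  have hfar : ∀ z ∈ ball x (r / 2), r / 2 ≤ ‖z‖ := fun z hz => by
    rw [mem_ball, dist_comm, dist_eq_norm] at hz
    linarith [norm_sub_norm_le x z]
  have hgrad := norm_fderiv_le_of_lap_bound (f := fun z => f z - L) (half_pos hr)
    (M := K / (r / 2)) (F := A / (r / 2) ^ 4)
    (fun z hz => (hx z hz).1.1.sub contDiffAt_const) (fun z hz => ?_) (fun z hz => ?_)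
  · rw [fderiv_sub_const] at hgrad
    calc ‖fderiv ℝ f x‖ ≤ A / (r / 2) ^ 4 * (r / 2) + 4 * (K / (r / 2)) / (r / 2) := hgrad
      _ = 8 * A / r ^ 2 / r + 16 * K / r ^ 2 := by field_simp; ring
      _ ≤ 8 * A / r ^ 2 + 16 * K / r ^ 2 := by
        gcongr ?_ + _
        exact div_le_self (by positivity) hx1
      _ = _ := by ring
  · calc |f z - L| ≤ K / ‖z‖ := (hx z hz).2
      _ ≤ K / (r / 2) := by
        gcongr
        exact hfar z hz
  · calc |lap (fun z => f z - L) z| = |lap f z| := by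
          rw [lap_sub (hx z hz).1.1 contDiffAt_const, lap_const, sub_zero]
      _ ≤ A / ‖z‖ ^ 4 := (hx z hz).1.2
      _ ≤ A / (r / 2) ^ 4 := by
        gcongr
        exact hfar z hz

end PointEstimates

section Regularity

variable {f u G : Pl → ℝ} {U : Set Pl} {x : Pl} {r : ℝ}

/-- `G` is the Laplacian of `u` on `U` in a generalised sense: locally, `u` and `G` are uniform
limits of `C²` functions and of their Laplacians. Unlike the classical notion it passes to
directional derivatives. -/
def HasUniformLap (u G : Pl → ℝ) (U : Set Pl) : Prop :=
  ∀ x ∈ U, ∃ r > 0, ∀ ε > 0, ∃ w : Pl → ℝ, ∀ y ∈ ball x r,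
    ContDiffAt ℝ 2 w y ∧ |w y - u y| ≤ ε ∧ |lap w y - G y| ≤ ε

lemma hasUniformLap_lap (hu : ContDiffOn ℝ 2 u U) (hU : IsOpen U) : HasUniformLap u (lap u) U := by
  intro x hx
  obtain ⟨r, hr, hrU⟩ := Metric.isOpen_iff.1 hU x hx
  exact ⟨r, hr, fun ε hε => ⟨u, fun y hy =>
    ⟨hu.contDiffAt (hU.mem_nhds (hrU hy)), by simpa using hε.le, by simpa using hε.le⟩⟩⟩

lemma norm_fderiv_sub_fderiv_le {w₁ w₂ : Pl → ℝ} {ε₁ ε₂ : ℝ} (hr : 0 < r)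
    (hw₁ : ∀ y ∈ ball x r, ContDiffAt ℝ 2 w₁ y ∧ |w₁ y - u y| ≤ ε₁ ∧ |lap w₁ y - G y| ≤ ε₁)
    (hw₂ : ∀ y ∈ ball x r, ContDiffAt ℝ 2 w₂ y ∧ |w₂ y - u y| ≤ ε₂ ∧ |lap w₂ y - G y| ≤ ε₂) :
    ‖fderiv ℝ w₁ x - fderiv ℝ w₂ x‖ ≤ (ε₁ + ε₂) * (r + 4 / r) := by
  have hx := mem_ball_self (x := x) hr
  have hdiff : ∀ {w : Pl → ℝ}, ContDiffAt ℝ 2 w x → DifferentiableAt ℝ w x := fun hw =>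
    hw.differentiableAt two_ne_zero
  rw [← fderiv_sub (hdiff (hw₁ x hx).1) (hdiff (hw₂ x hx).1)]
  calc ‖fderiv ℝ (w₁ - w₂) x‖ ≤ (ε₁ + ε₂) * r + 4 * (ε₁ + ε₂) / r := by
        refine norm_fderiv_le_of_lap_bound hr (fun y hy => (hw₁ y hy).1.sub (hw₂ y hy).1)
          (fun y hy => ?_) (fun y hy => ?_)
        · exact (abs_sub_le _ (u y) _).trans
            (add_le_add (hw₁ y hy).2.1 (abs_sub_comm (u y) _ ▸ (hw₂ y hy).2.1))
        · have hlap : lap (w₁ - w₂) y = lap w₁ y - lap w₂ y := lap_sub (hw₁ y hy).1 (hw₂ y hy).1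
          rw [hlap]
          exact (abs_sub_le _ (G y) _).trans
            (add_le_add (hw₁ y hy).2.2 (abs_sub_comm (G y) _ ▸ (hw₂ y hy).2.2))
    _ = (ε₁ + ε₂) * (r + 4 / r) := by ring

lemma contDiffAt_one_of_tendsto_of_uniformCauchySeqOn {w : ℕ → Pl → ℝ} (hr : 0 < r)
    (hw : ∀ n, ∀ y ∈ ball x r, ContDiffAt ℝ 1 (w n) y)
    (hlim : ∀ y ∈ ball x r, Tendsto (fun n => w n y) atTop (𝓝 (u y)))
    (hcauchy : UniformCauchySeqOn (fun n => fderiv ℝ (w n)) atTop (ball x r)) :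
    ContDiffAt ℝ 1 u x := by
  have hptwise : ∀ y, ∃ T, y ∈ ball x r → Tendsto (fun n => fderiv ℝ (w n) y) atTop (𝓝 T) :=
    fun y => by
      by_cases hy : y ∈ ball x r
      · exact (cauchySeq_tendsto_of_complete (hcauchy.cauchySeq hy)).imp fun _ h _ => h
      · exact ⟨0, fun h => absurd h hy⟩
  choose u' hu' using hptwise
  have hunif := hcauchy.tendstoUniformlyOn_of_tendsto hu'
  refine contDiffAt_one_iff.2 ⟨u', ball x r, ball_mem_nhds x hr, ?_, fun y hy => ?_⟩
  · refine hunif.continuousOn (Frequently.of_forall fun n y hy => ?_)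
    exact ((hw n y hy).fderiv_right (m := 0) le_rfl).continuousAt.continuousWithinAt
  · exact hasFDerivAt_of_tendstoUniformlyOn isOpen_ball hunif
      (fun n z hz => ((hw n z hz).differentiableAt one_ne_zero).hasFDerivAt) hlim hy

lemma HasUniformLap.contDiffAt_one (h : HasUniformLap u G U) (hx : x ∈ U) : ContDiffAt ℝ 1 u x := by
  obtain ⟨r, hr, happrox⟩ := h x hx
  choose w hw using fun n : ℕ => happrox (1 / ((n : ℝ) + 1)) (by positivity)
  have hr2 := half_pos hr
  have hsub : ∀ y ∈ ball x (r / 2), ball y (r / 2) ⊆ ball x r := fun y hy =>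
    ball_subset_ball' (by linarith [mem_ball.1 hy])
  have hε := tendsto_one_div_add_atTop_nhds_zero_nat (𝕜 := ℝ)
  refine contDiffAt_one_of_tendsto_of_uniformCauchySeqOn hr2
    (fun n y hy => (hw n y (hsub y hy (mem_ball_self hr2))).1.of_le one_le_two)
    (fun y hy => ?_) ?_
  · refine tendsto_iff_dist_tendsto_zero.2 (squeeze_zero (fun _ => dist_nonneg) (fun n => ?_) hε)
    exact (hw n y (hsub y hy (mem_ball_self hr2))).2.1
  · rw [Metric.uniformCauchySeqOn_iff]
    intro ε hε0
    have hsmall : Tendsto (fun n : ℕ => 2 * (1 / ((n : ℝ) + 1)) * (r / 2 + 4 / (r / 2)))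
        atTop (𝓝 0) := by
      simpa using (hε.const_mul 2).mul_const (r / 2 + 4 / (r / 2))
    obtain ⟨N, hN⟩ := (hsmall.eventually_lt_const hε0).exists
    refine ⟨N, fun m hm n hn y hy => ?_⟩
    calc dist (fderiv ℝ (w m) y) (fderiv ℝ (w n) y)
        ≤ (1 / ((m : ℝ) + 1) + 1 / ((n : ℝ) + 1)) * (r / 2 + 4 / (r / 2)) := by
          rw [dist_eq_norm]
          exact norm_fderiv_sub_fderiv_le hr2 (fun z hz => hw m z (hsub y hy hz))
            (fun z hz => hw n z (hsub y hy hz))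
      _ ≤ 2 * (1 / ((N : ℝ) + 1)) * (r / 2 + 4 / (r / 2)) := by
          rw [two_mul]
          gcongr
      _ < ε := hN

lemma eventually_norm_smul_lt (v : Pl) (hr : 0 < r) : ∀ᶠ t in 𝓝[>] (0 : ℝ), ‖t • v‖ < r := by
  have hcont : Continuous fun t : ℝ => ‖t • v‖ := by fun_prop
  have hlim : Tendsto (fun t : ℝ => ‖t • v‖) (𝓝[>] 0) (𝓝 0) := by
    simpa using (hcont.tendsto 0).mono_left nhdsWithin_le_nhds
  exact hlim.eventually_lt_const hr

lemma eventually_abs_slope_sub_fderiv_le (hr : 0 < r) (hf : ∀ y ∈ ball x r, ContDiffAt ℝ 1 f y)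
    (v : Pl) {ε : ℝ} (hε : 0 < ε) :
    ∀ᶠ h in 𝓝[>] (0 : ℝ), ∀ y ∈ ball x (r / 2),
      |h⁻¹ * (f (y + h • v) - f y) - fderiv ℝ f y v| ≤ ε := by
  have hr4 : 0 < r / 4 := by positivity
  have hsub : closedBall x (3 / 4 * r) ⊆ ball x r := closedBall_subset_ball (by linarith)
  have hcont : ContinuousOn (fderiv ℝ f) (closedBall x (3 / 4 * r)) := fun y hy =>
    ((hf y (hsub hy)).fderiv_right (m := 0) le_rfl).continuousAt.continuousWithinAt
  obtain ⟨δ, hδ, hunif⟩ := Metric.uniformContinuousOn_iff.1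
    ((isCompact_closedBall x _).uniformContinuousOn_of_continuous hcont)
    (ε / (‖v‖ + 1)) (by positivity)
  filter_upwards [eventually_norm_smul_lt v (lt_min hδ hr4), self_mem_nhdsWithin]
    with h hh hpos y hy
  rw [Set.mem_Ioi] at hpos
  have hmem : ∀ z ∈ ball y (min δ (r / 4)), z ∈ closedBall x (3 / 4 * r) := fun z hz => by
    have := dist_triangle z y x
    rw [mem_closedBall]
    linarith [mem_ball.1 hy, (mem_ball.1 hz).trans_le (min_le_right _ _)]
  have hy' := mem_ball_self (x := y) (lt_min hδ hr4)
  have hmvt := (convex_ball y (min δ (r / 4))).norm_image_sub_le_of_norm_hasFDerivWithin_le'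
    (φ := fderiv ℝ f y) (C := ε / (‖v‖ + 1))
    (fun z hz => ((hf z (hsub (hmem z hz))).differentiableAt
      one_ne_zero).hasFDerivAt.hasFDerivWithinAt)
    (fun z hz => dist_eq_norm (fderiv ℝ f z) _ ▸ (hunif z (hmem z hz) y (hmem y hy')
      ((mem_ball.1 hz).trans_le (min_le_left _ _))).le)
    hy' (by simpa using hh : y + h • v ∈ ball y (min δ (r / 4)))
  rw [add_sub_cancel_left, map_smul, smul_eq_mul, norm_smul, Real.norm_of_nonneg hpos.le,
    Real.norm_eq_abs] at hmvt
  calc |h⁻¹ * (f (y + h • v) - f y) - fderiv ℝ f y v|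
      = h⁻¹ * |f (y + h • v) - f y - h * fderiv ℝ f y v| := by
        rw [← abs_of_pos (inv_pos.2 hpos), ← abs_mul, abs_of_pos (inv_pos.2 hpos)]
        congr 1
        field_simp
    _ ≤ h⁻¹ * (ε / (‖v‖ + 1) * (h * ‖v‖)) := by gcongr
    _ = ε * (‖v‖ / (‖v‖ + 1)) := by field_simp
    _ ≤ ε := mul_le_of_le_one_right hε.le ((div_le_one (by positivity)).2 (by linarith))

lemma contDiffAt_slope {w : Pl → ℝ} {y v : Pl} {h : ℝ} (hy : ContDiffAt ℝ 2 w y)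
    (hyv : ContDiffAt ℝ 2 w (y + h • v)) :
    ContDiffAt ℝ 2 (fun z => h⁻¹ * (w (z + h • v) - w z)) y :=
  contDiffAt_const.mul ((hyv.comp y (by fun_prop)).sub hy)

lemma lap_slope {w : Pl → ℝ} {y v : Pl} {h : ℝ} (hy : ContDiffAt ℝ 2 w y)
    (hyv : ContDiffAt ℝ 2 w (y + h • v)) :
    lap (fun z => h⁻¹ * (w (z + h • v) - w z)) y = h⁻¹ * (lap w (y + h • v) - lap w y) := by
  have hshift : ContDiffAt ℝ 2 (fun z => w (z + h • v)) y := hyv.comp y (by fun_prop)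
  have htranslate : lap (fun z => w (z + h • v)) y = lap w (y + h • v) := by
    simpa [add_comm] using lap_comp_similarity (f := w) (x := y) (h • v) 1
      (LinearIsometryEquiv.refl ℝ Pl) (by simpa [add_comm] using hyv)
  rw [lap_const_mul _ (hshift.sub hy), lap_sub hshift hy, htranslate]

lemma abs_slope_sub_le_of_close {a b c d D ε t : ℝ} (ht : 0 < t) (hac : |a - c| ≤ ε / 4 * t)
    (hbd : |b - d| ≤ ε / 4 * t) (hD : |t⁻¹ * (c - d) - D| ≤ ε / 2) :
    |t⁻¹ * (a - b) - D| ≤ ε := by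
  have hdiff : |(a - c) - (b - d)| ≤ ε / 2 * t := (abs_sub _ _).trans (by linarith)
  calc |t⁻¹ * (a - b) - D| = |t⁻¹ * ((a - c) - (b - d)) + (t⁻¹ * (c - d) - D)| := by ring_nf
    _ ≤ t⁻¹ * |(a - c) - (b - d)| + |t⁻¹ * (c - d) - D| := by
      refine (abs_add_le _ _).trans_eq ?_
      rw [abs_mul, abs_of_pos (inv_pos.2 ht)]
    _ ≤ t⁻¹ * (ε / 2 * t) + ε / 2 := by gcongr
    _ = ε := by field_simp; ring

lemma HasUniformLap.fderiv_apply (h : HasUniformLap u G U) (hU : IsOpen U)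
    (hG : ContDiffOn ℝ 1 G U) (v : Pl) :
    HasUniformLap (fun y => fderiv ℝ u y v) (fun y => fderiv ℝ G y v) U := by
  intro x hx
  obtain ⟨r₀, hr₀, happrox⟩ := h x hx
  obtain ⟨r₁, hr₁, hrU⟩ := Metric.isOpen_iff.1 hU x hx
  set r := min r₀ r₁
  have hr : 0 < r := lt_min hr₀ hr₁
  have hball : ∀ y ∈ ball x r, y ∈ U := fun y hy => hrU (ball_subset_ball (min_le_right _ _) hy)
  refine ⟨r / 2, half_pos hr, fun ε hε => ?_⟩
  have hslope_u := eventually_abs_slope_sub_fderiv_le hr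
    (fun y hy => h.contDiffAt_one (hball y hy)) v (half_pos hε)
  have hslope_G := eventually_abs_slope_sub_fderiv_le hr
    (fun y hy => hG.contDiffAt (hU.mem_nhds (hball y hy))) v (half_pos hε)
  obtain ⟨t, ⟨⟨hut, hGt⟩, htv⟩, ht⟩ :=
    ((hslope_u.and hslope_G).and (eventually_norm_smul_lt v (half_pos hr))).and
      self_mem_nhdsWithin |>.exists
  obtain ⟨w, hw⟩ := happrox (ε / 4 * t) (by positivity)
  refine ⟨fun z => t⁻¹ * (w (z + t • v) - w z), fun y hy => ?_⟩
  have hy₀ : y ∈ ball x r₀ :=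
    ball_subset_ball ((half_le_self hr.le).trans (min_le_left _ _)) hy
  have hyt : y + t • v ∈ ball x r₀ := by
    have := dist_triangle (y + t • v) y x
    rw [dist_self_add_left] at this
    rw [mem_ball] at hy ⊢
    linarith [min_le_left r₀ r₁]
  obtain ⟨hreg, hwu, hwG⟩ := hw y hy₀
  obtain ⟨hregt, hwut, hwGt⟩ := hw _ hyt
  refine ⟨contDiffAt_slope hreg hregt, abs_slope_sub_le_of_close ht hwut hwu (hut y hy), ?_⟩
  rw [lap_slope hreg hregt]
  exact abs_slope_sub_le_of_close ht hwGt hwG (hGt y hy)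

theorem HasUniformLap.contDiffOn (hU : IsOpen U) :
    ∀ (k : ℕ) {u G : Pl → ℝ}, HasUniformLap u G U → ContDiffOn ℝ k G U →
      ContDiffOn ℝ (k + 1) u U
  | 0, _, _, h, _ => fun x hx => by
    simpa using (h.contDiffAt_one hx).contDiffWithinAt
  | k + 1, u, G, h, hG => by
    rw [Nat.cast_succ] at hG ⊢
    have hG' := (contDiffOn_succ_iff_fderiv_of_isOpen hU).1 hG
    refine (contDiffOn_succ_iff_fderiv_of_isOpen hU).2
      ⟨fun x hx => ((h.contDiffAt_one hx).differentiableAt one_ne_zero).differentiableWithinAt,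
        by simp, contDiffOn_clm_apply.2 fun v => ?_⟩
    exact HasUniformLap.contDiffOn hU k (h.fderiv_apply hU (hG.of_le (by simp)) v)
      (contDiffOn_clm_apply.1 hG'.2.2 v)

theorem contDiffOn_succ_of_lap (hU : IsOpen U) (hu : ContDiffOn ℝ 2 u U) {k : ℕ}
    (hlap : ContDiffOn ℝ k (lap u) U) : ContDiffOn ℝ (k + 1) u U :=
  (hasUniformLap_lap hu hU).contDiffOn hU k hlap

end Regularity

section PFunction

variable {a f : Pl → ℝ} {x : Pl}

/-- The P-function `¼ e⁻ᵃ |∇f|² + cosh (f / 2)`. For two solutions `u₁`, `u₂` of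
`Δu + e^(w + u) = 0` it is formed with `f = u₁ - u₂` and `a = w + (u₁ + u₂) / 2`. -/
def pFunction (a f : Pl → ℝ) (x : Pl) : ℝ :=
  1 / 4 * (Real.exp (-a x) * gradSq f x) + Real.cosh (1 / 2 * f x)

lemma contDiffAt_gradSq (hf : ContDiffAt ℝ 3 f x) : ContDiffAt ℝ 2 (gradSq f) x :=
  ContDiffAt.sum fun i _ => (contDiffAt_pderiv hf (by norm_num) i).pow 2

lemma contDiffAt_cosh_half (hf : ContDiffAt ℝ 2 f x) :
    ContDiffAt ℝ 2 (fun y => Real.cosh (1 / 2 * f y)) x :=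
  Real.contDiff_cosh.contDiffAt.comp x (contDiffAt_const.mul hf)

lemma contDiffAt_pFunction (ha : ContDiffAt ℝ 2 a x) (hf : ContDiffAt ℝ 3 f x) :
    ContDiffAt ℝ 2 (pFunction a f) x :=
  (contDiffAt_const.mul (ha.neg.exp.mul (contDiffAt_gradSq hf))).add
    (contDiffAt_cosh_half (hf.of_le (by norm_num)))

lemma pderiv_gradSq (hf : ContDiffAt ℝ 2 f x) (i : Fin 2) :
    pderiv i (gradSq f) x = 2 * ∑ j, pderiv j f x * pderiv i (pderiv j f) x := by
  have hd := fun j => differentiableAt_pderiv hf j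
  have hexpand : gradSq f = fun y => pderiv 0 f y * pderiv 0 f y + pderiv 1 f y * pderiv 1 f y := by
    funext y
    rw [gradSq, Fin.sum_univ_two, sq, sq]
  rw [hexpand, pderiv_add ((hd 0).fun_mul (hd 0)) ((hd 1).fun_mul (hd 1)),
    pderiv_mul (hd 0) (hd 0), pderiv_mul (hd 1) (hd 1), Fin.sum_univ_two]
  ring

theorem lap_gradSq (hf : ContDiffAt ℝ 3 f x) :
    lap (gradSq f) x
      = 2 * ∑ i, gradSq (pderiv i f) x + 2 * ∑ i, pderiv i f x * pderiv i (lap f) x := by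
  have hc := fun j => contDiffAt_pderiv hf (m := 2) (by norm_num) j
  have hexpand : gradSq f = fun y => pderiv 0 f y * pderiv 0 f y + pderiv 1 f y * pderiv 1 f y := by
    funext y
    rw [gradSq, Fin.sum_univ_two, sq, sq]
  rw [hexpand, lap_add ((hc 0).mul (hc 0)) ((hc 1).mul (hc 1)), lap_mul (hc 0) (hc 0),
    lap_mul (hc 1) (hc 1)]
  simp only [Fin.sum_univ_two, pderiv_lap hf, gradSq]
  ring

lemma pderiv_exp_neg (ha : ContDiffAt ℝ 2 a x) (i : Fin 2) :
    pderiv i (fun y => Real.exp (-a y)) x = -Real.exp (-a x) * pderiv i a x :=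
  pderiv_comp (φ := fun t => Real.exp (-t)) (ha.differentiableAt two_ne_zero)
    (by simpa using (hasDerivAt_neg (a x)).exp) i

lemma lap_exp_neg (ha : ContDiffAt ℝ 2 a x) :
    lap (fun y => Real.exp (-a y)) x = Real.exp (-a x) * (gradSq a x - lap a x) := by
  have hderiv : ∀ t : ℝ, HasDerivAt (fun t => Real.exp (-t)) (-Real.exp (-t)) t := fun t => by
    simpa using (hasDerivAt_neg t).exp
  rw [lap_comp (φ := fun t => Real.exp (-t)) (φ' := fun t => -Real.exp (-t)) ha
    (Eventually.of_forall hderiv) (hderiv (a x)).neg]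
  ring

lemma hasDerivAt_cosh_half (t : ℝ) :
    HasDerivAt (fun t => Real.cosh (1 / 2 * t)) (1 / 2 * Real.sinh (1 / 2 * t)) t := by
  simpa only [mul_one, mul_comm (1 / 2 : ℝ) (Real.sinh _), id_eq] using
    ((hasDerivAt_id t).const_mul (1 / 2)).cosh

lemma hasDerivAt_sinh_half (t : ℝ) :
    HasDerivAt (fun t => Real.sinh (1 / 2 * t)) (1 / 2 * Real.cosh (1 / 2 * t)) t := by
  simpa only [mul_one, mul_comm (1 / 2 : ℝ) (Real.cosh _), id_eq] using
    ((hasDerivAt_id t).const_mul (1 / 2)).sinh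

lemma lap_cosh_half (hf : ContDiffAt ℝ 2 f x) :
    lap (fun y => Real.cosh (1 / 2 * f y)) x
      = 1 / 4 * Real.cosh (1 / 2 * f x) * gradSq f x
        + 1 / 2 * Real.sinh (1 / 2 * f x) * lap f x := by
  rw [lap_comp (φ := fun t => Real.cosh (1 / 2 * t)) hf (Eventually.of_forall hasDerivAt_cosh_half)
    ((hasDerivAt_sinh_half (f x)).const_mul (1 / 2))]
  ring

lemma differentiableAt_sinh_half (hf : DifferentiableAt ℝ f x) :
    DifferentiableAt ℝ (fun y => Real.sinh (1 / 2 * f y)) x :=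
  (hasDerivAt_sinh_half (f x)).differentiableAt.comp x hf

lemma pderiv_exp_mul_sinh_half (ha : DifferentiableAt ℝ a x) (hf : DifferentiableAt ℝ f x)
    (i : Fin 2) :
    pderiv i (fun y => Real.exp (a y) * Real.sinh (1 / 2 * f y)) x
      = Real.exp (a x) * (Real.sinh (1 / 2 * f x) * pderiv i a x
        + 1 / 2 * Real.cosh (1 / 2 * f x) * pderiv i f x) := by
  rw [pderiv_mul ha.exp (differentiableAt_sinh_half hf),
    pderiv_comp ha (Real.hasDerivAt_exp _), pderiv_comp hf (hasDerivAt_sinh_half _)]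
  ring

lemma lap_pFunction (ha : ContDiffAt ℝ 2 a x) (hf : ContDiffAt ℝ 3 f x) :
    lap (pFunction a f) x
      = 1 / 4 * Real.exp (-a x) * (2 * ∑ i, gradSq (pderiv i f) x
          + 2 * ∑ i, pderiv i f x * pderiv i (lap f) x + gradSq f x * (gradSq a x - lap a x)
          - 4 * ∑ i, ∑ j, pderiv i a x * pderiv j f x * pderiv i (pderiv j f) x)
        + 1 / 4 * Real.cosh (1 / 2 * f x) * gradSq f x
        + 1 / 2 * Real.sinh (1 / 2 * f x) * lap f x := by
  have hf2 : ContDiffAt ℝ 2 f x := hf.of_le (by norm_num)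
  have hexp : ContDiffAt ℝ 2 (fun y => Real.exp (-a y)) x := ha.neg.exp
  have hgrad := contDiffAt_gradSq hf
  have hsplit : lap (pFunction a f) x
      = 1 / 4 * lap (fun y => Real.exp (-a y) * gradSq f y) x
        + lap (fun y => Real.cosh (1 / 2 * f y)) x := by
    rw [← lap_const_mul _ (hexp.mul hgrad)]
    exact lap_add (contDiffAt_const.mul (hexp.mul hgrad)) (contDiffAt_cosh_half hf2)
  rw [hsplit, lap_mul hexp hgrad, lap_exp_neg ha, lap_gradSq hf, lap_cosh_half hf2]
  simp only [pderiv_exp_neg ha, pderiv_gradSq hf2, Fin.sum_univ_two]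
  ring

/-- The difference of the two sides is `¼ e⁻ᵃ (A² + B²)`, where `A` and `B` are the two components
of the trace-free part of `∇²f - sym (∇a ⊗ ∇f)`, up to a factor `2`. -/
theorem neg_mul_gradSq_le_lap_pFunction {κ : ℝ} (ha : ContDiffAt ℝ 2 a x)
    (hf : ContDiffAt ℝ 3 f x)
    (hlapf : lap f =ᶠ[𝓝 x] fun y => -2 * (Real.exp (a y) * Real.sinh (1 / 2 * f y)))
    (hlapa : lap a x = κ - Real.exp (a x) * Real.cosh (1 / 2 * f x)) :
    -(1 / 4 * Real.exp (-a x) * κ * gradSq f x) ≤ lap (pFunction a f) x := by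
  have hf2 : ContDiffAt ℝ 2 f x := hf.of_le (by norm_num)
  have hpderiv : ∀ i, pderiv i (lap f) x = -2 * (Real.exp (a x) * (Real.sinh (1 / 2 * f x)
      * pderiv i a x + 1 / 2 * Real.cosh (1 / 2 * f x) * pderiv i f x)) := fun i => by
    have hda := ha.differentiableAt two_ne_zero
    have hdf := hf2.differentiableAt two_ne_zero
    rw [pderiv_congr hlapf, pderiv_mul (differentiableAt_const _)
      (hda.exp.fun_mul (differentiableAt_sinh_half hdf)), pderiv_const,
      pderiv_exp_mul_sinh_half hda hdf, mul_zero, add_zero]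
  have hlapfx : lap f x = -2 * (Real.exp (a x) * Real.sinh (1 / 2 * f x)) := hlapf.self_of_nhds
  have hlap : pderiv 0 (pderiv 0 f) x + pderiv 1 (pderiv 1 f) x
      = -2 * (Real.exp (a x) * Real.sinh (1 / 2 * f x)) := by
    rw [← hlapfx]
    exact (Fin.sum_univ_two fun i => pderiv i (pderiv i f) x).symm
  set A := pderiv 0 (pderiv 0 f) x - pderiv 1 (pderiv 1 f) x - pderiv 0 a x * pderiv 0 f x
    + pderiv 1 a x * pderiv 1 f x with hA
  set B := 2 * pderiv 0 (pderiv 1 f) x - pderiv 0 a x * pderiv 1 f x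
    - pderiv 1 a x * pderiv 0 f x with hB
  have hsquares : lap (pFunction a f) x
      = -(1 / 4 * Real.exp (-a x) * κ * gradSq f x)
        + 1 / 4 * Real.exp (-a x) * (A ^ 2 + B ^ 2) := by
    rw [lap_pFunction ha hf, hlapfx, hlapa, hA, hB]
    simp only [hpderiv, gradSq, Fin.sum_univ_two, pderiv_comm hf2 1 0]
    rw [eq_sub_of_add_eq hlap, Real.exp_neg]
    field_simp
    ring
  rw [hsquares]
  exact le_add_of_nonneg_right (by positivity)

end PFunction

section Liouville

variable {ψ : Pl → ℝ} {S : Set Pl} {x x₀ : Pl}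

lemma contDiffAt_log_barrier (h : x ≠ x₀) (V ε C : ℝ) :
    ContDiffAt ℝ 2 (fun y => ε * (Real.log (‖y - x₀‖ ^ 2) - C) - V) x :=
  (contDiffAt_const.mul ((contDiffAt_log_norm_sub_sq h).sub contDiffAt_const)).sub
    contDiffAt_const

lemma lap_log_barrier (h : x ≠ x₀) (V ε C : ℝ) :
    lap (fun y => ε * (Real.log (‖y - x₀‖ ^ 2) - C) - V) x = 0 := by
  have hlog := contDiffAt_log_norm_sub_sq h
  rw [lap_sub (contDiffAt_const.mul (hlog.sub contDiffAt_const)) contDiffAt_const,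
    lap_const_mul ε (hlog.sub contDiffAt_const), lap_sub hlog contDiffAt_const, lap_const,
    lap_const, lap_log_norm_sub_sq h]
  ring

lemma exists_radius_log_gt (x x₀ : Pl) {ε : ℝ} (hε : 0 < ε) (C T : ℝ) :
    ∃ R, ‖x - x₀‖ < R ∧ T < ε * (Real.log (R ^ 2) - C) := by
  have hlog : Tendsto (fun R : ℝ => ε * (Real.log (R ^ 2) - C)) atTop atTop :=
    (tendsto_atTop_add_const_right _ _ (Real.tendsto_log_atTop.comp
      (tendsto_pow_atTop two_ne_zero))).const_mul_atTop hε
  exact ((eventually_gt_atTop _).and (hlog.eventually_gt_atTop T)).exists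

lemma SuperharmonicOn.sub_log_le (hψ : SuperharmonicOn ψ Sᶜ) (hS : S.Finite) {m V δ d ε : ℝ}
    (hm : ∀ y ∈ Sᶜ, m ≤ ψ y) (hδ : 0 < δ) (hδd : δ < d) (hV : ∀ y ∈ ball x₀ d, V ≤ ψ y)
    (hε : 0 < ε) (hx : x ∈ Sᶜ) (hxδ : δ < ‖x - x₀‖) :
    V - ε * (Real.log (‖x - x₀‖ ^ 2) - Real.log (δ ^ 2)) ≤ ψ x := by
  obtain ⟨R, hxR, hR⟩ := exists_radius_log_gt x x₀ hε (Real.log (δ ^ 2)) (V - m)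
  set b : Pl → ℝ := fun y => ε * (Real.log (‖y - x₀‖ ^ 2) - Real.log (δ ^ 2)) - V with hb
  set Ω : Set Pl := {y | ‖y - x₀‖ ∈ Set.Ioo δ R} with hΩ_def
  have hΩ : IsOpen Ω := isOpen_Ioo.preimage (by fun_prop)
  have hΩne : ∀ y, δ ≤ ‖y - x₀‖ → y ≠ x₀ := by
    rintro _ hy rfl
    exact (hδ.trans_le hy).ne' (by simp)
  have hbΩ : ∀ y ∈ Ω, -V ≤ b y := fun y hy => by
    have hlog : Real.log (δ ^ 2) ≤ Real.log (‖y - x₀‖ ^ 2) := by gcongr; exact hy.1.le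
    linarith [mul_nonneg hε.le (sub_nonneg.2 hlog)]
  suffices h : ∀ y ∈ Ω \ S, 0 ≤ ψ y + b y by linarith [h x ⟨⟨hxδ, hxR⟩, hx⟩]
  refine SuperharmonicOn.nonneg ⟨fun y hy => ?_, fun y hy => ?_⟩ hΩ
    (isBounded_ball.subset fun y hy => mem_ball_iff_norm.2 hy.2) hS (fun p _ => ⟨m - V, ?_⟩) ?_
  · exact (hψ.contDiffAt y hy.2).add (contDiffAt_log_barrier (hΩne y hy.1.1.le) V ε _)
  · have hne := hΩne y hy.1.1.le
    rw [lap_add (hψ.contDiffAt y hy.2) (contDiffAt_log_barrier hne V ε _),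
      lap_log_barrier hne, add_zero]
    exact hψ.lap_nonpos y hy.2
  · filter_upwards [self_mem_nhdsWithin] with y hy
    linarith [hm y hy.2, hbΩ y hy.1]
  · intro z hz η hη
    have hclosure : closure Ω ⊆ {y | ‖y - x₀‖ ∈ Set.Icc δ R} :=
      closure_minimal (fun y hy => Set.Ioo_subset_Icc_self hy)
        (isClosed_Icc.preimage (by fun_prop))
    have hzδR : ‖z - x₀‖ ∈ Set.Icc δ R := hclosure hz.1.1
    by_cases hzd : ‖z - x₀‖ < d
    · filter_upwards [self_mem_nhdsWithin,
        mem_nhdsWithin_of_mem_nhds (isOpen_ball.mem_nhds (mem_ball_iff_norm.2 hzd))] with y hy hyd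
      linarith [hV y hyd, hbΩ y hy.1]
    · have hzR : ‖z - x₀‖ = R := hzδR.2.antisymm <| not_lt.1 fun h =>
        hz.1.2 (hΩ.interior_eq.symm ▸ ⟨hδd.trans_le (not_lt.1 hzd), h⟩)
      have hbz : -m < b z := by simp only [hb, hzR]; linarith
      have hbcont := (contDiffAt_log_barrier (hΩne z hzδR.1) V ε (Real.log (δ ^ 2))).continuousAt
      filter_upwards [self_mem_nhdsWithin,
        mem_nhdsWithin_of_mem_nhds (hbcont.eventually (lt_mem_nhds hbz))] with y hy hby
      linarith [hm y hy.2]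

lemma SuperharmonicOn.apply_le_of_forall_ge (hψ : SuperharmonicOn ψ Sᶜ) (hS : S.Finite) {m : ℝ}
    (hm : ∀ y ∈ Sᶜ, m ≤ ψ y) (hx : x ∈ Sᶜ) (hx₀ : x₀ ∈ Sᶜ) : ψ x₀ ≤ ψ x := by
  rcases eq_or_ne x x₀ with rfl | hne
  · exact le_rfl
  refine le_of_forall_lt fun V hV => ?_
  obtain ⟨W, hVW, hW⟩ := exists_between hV
  obtain ⟨d, hd, hdW⟩ := Metric.eventually_nhds_iff_ball.1
    ((hψ.contDiffAt x₀ hx₀).continuousAt.eventually (lt_mem_nhds hW))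
  obtain ⟨δ, hδ, hδmin⟩ := exists_between (lt_min hd (norm_pos_iff.2 (sub_ne_zero.2 hne)))
  obtain ⟨hδd, hδx⟩ := lt_min_iff.1 hδmin
  refine hVW.trans_le ?_
  set C := Real.log (‖x - x₀‖ ^ 2) - Real.log (δ ^ 2)
  have hlim : Tendsto (fun ε : ℝ => W - ε * C) (𝓝[>] 0) (𝓝 W) := by
    have h : Continuous fun ε : ℝ => W - ε * C := by fun_prop
    simpa using (h.tendsto 0).mono_left nhdsWithin_le_nhds
  refine le_of_tendsto hlim ?_
  filter_upwards [self_mem_nhdsWithin] with ε hε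
  exact hψ.sub_log_le hS hm hδ hδd (fun y hy => (hdW y hy).le) hε hx hδx

theorem SuperharmonicOn.eq_of_bddBelow (hψ : SuperharmonicOn ψ Sᶜ) (hS : S.Finite)
    (hbdd : BddBelow (ψ '' Sᶜ)) (hx : x ∈ Sᶜ) (hx₀ : x₀ ∈ Sᶜ) : ψ x = ψ x₀ := by
  obtain ⟨m, hm⟩ := hbdd
  have hm' : ∀ y ∈ Sᶜ, m ≤ ψ y := fun y hy => hm (Set.mem_image_of_mem ψ hy)
  exact (hψ.apply_le_of_forall_ge hS hm' hx₀ hx).antisymm (hψ.apply_le_of_forall_ge hS hm' hx hx₀)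

lemma bddAbove_image_of_eventually_le {E : Type*} [PseudoMetricSpace E] [ProperSpace E]
    {P : E → ℝ} {U : Set E} (hloc : ∀ x, ∃ m, ∀ᶠ y in 𝓝[U] x, P y ≤ m)
    (hinf : ∃ m, ∀ᶠ y in Bornology.cobounded E, P y ≤ m) : BddAbove (P '' U) := by
  obtain ⟨m, hm⟩ := hinf
  rw [cobounded_eq_cocompact] at hm
  obtain ⟨K, hK, hKm⟩ := mem_cocompact.1 hm
  have hcompact : BddAbove (P '' (U ∩ K)) := by
    refine hK.induction_on (p := fun s => BddAbove (P '' (U ∩ s))) (by simp)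
      (fun s t hst ht => ht.mono (by gcongr)) (fun s t hs ht => ?_) fun x _ => ?_
    · rw [Set.inter_union_distrib_left, Set.image_union]
      exact hs.union ht
    · obtain ⟨M, hM⟩ := hloc x
      obtain ⟨t, ht, htM⟩ := mem_nhdsWithin_iff_exists_mem_nhds_inter.1 hM
      refine ⟨t, mem_nhdsWithin_of_mem_nhds ht, M, ?_⟩
      rintro _ ⟨y, hy, rfl⟩
      exact htM hy.symm
  refine (hcompact.union (⟨m, ?_⟩ : BddAbove (P '' (U ∩ Kᶜ)))).mono ?_
  · rintro _ ⟨y, hy, rfl⟩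
    exact hKm hy.2
  · rw [← Set.image_union, Set.inter_union_compl]

end Liouville

section FiniteRange

variable {X ι : Type*} [TopologicalSpace X] [T1Space X] [Finite ι]

lemma isOpen_compl_range (q : ι → X) : IsOpen (Set.range q)ᶜ :=
  (Set.finite_range q).isClosed.isOpen_compl

lemma compl_range_mem_nhdsNE (q : ι → X) (x : X) : (Set.range q)ᶜ ∈ 𝓝[≠] x :=
  nhdsNE_le_cofinite x (Set.finite_range q).compl_mem_cofinite

end FiniteRange

/-- The exponent `a = w + (u + v) / 2` of the geometric mean of `e^(w + u)` and `e^(w + v)`. -/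
def meanExponent (w u v : Pl → ℝ) (x : Pl) : ℝ := w x + 1 / 2 * (u x + v x)

section GrowthBounds

variable {F : Filter Pl} {a f g r u v w : Pl → ℝ} {β L : ℝ}

lemma exists_eventually_exp_le_rpow (hr : ∀ᶠ x in F, 0 < r x)
    (hg : Tendsto (fun x => g x - β * Real.log (r x)) F (𝓝 L)) :
    ∃ C, ∀ᶠ x in F, Real.exp (g x) ≤ C * r x ^ β := by
  refine ⟨Real.exp (L + 1), ?_⟩
  filter_upwards [hr, hg.eventually_le_const (lt_add_one L)] with x hrx hgx
  rw [Real.rpow_def_of_pos hrx, ← Real.exp_add, Real.exp_le_exp]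
  linarith

/-- The two bounds meet the definition of `pFunction` exactly: `e⁻ᵃ |∇f|²` is of order
`r ^ (-β) * (r ^ (β / 2)) ^ 2 = 1`. -/
lemma exists_eventually_pFunction_le (hr : ∀ᶠ x in F, 0 < r x) (hf : Tendsto f F (𝓝 L))
    (hfderiv : ∃ K, ∀ᶠ x in F, ‖fderiv ℝ f x‖ ≤ K * r x ^ (β / 2))
    (hexp : ∃ C, ∀ᶠ x in F, Real.exp (-a x) ≤ C * r x ^ (-β)) :
    ∃ m, ∀ᶠ x in F, pFunction a f x ≤ m := by
  obtain ⟨K, hK⟩ := hfderiv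
  obtain ⟨C, hC⟩ := hexp
  have hcosh : Tendsto (fun x => Real.cosh (1 / 2 * f x)) F (𝓝 (Real.cosh (1 / 2 * L))) :=
    (Real.continuous_cosh.tendsto _).comp (hf.const_mul _)
  refine ⟨1 / 4 * (C * (2 * K ^ 2)) + (Real.cosh (1 / 2 * L) + 1), ?_⟩
  filter_upwards [hr, hK, hC, hcosh.eventually_le_const (lt_add_one _)] with x hrx hKx hCx hcoshx
  have hgrad : gradSq f x ≤ 2 * (K * r x ^ (β / 2)) ^ 2 :=
    gradSq_le_norm_fderiv.trans (by gcongr)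
  have hrpow : r x ^ (-β) * (r x ^ (β / 2)) ^ 2 = 1 := by
    rw [← Real.rpow_mul_natCast hrx.le, ← Real.rpow_add hrx]
    simp
  have hproduct : Real.exp (-a x) * gradSq f x ≤ C * (2 * K ^ 2) :=
    calc Real.exp (-a x) * gradSq f x
        ≤ C * r x ^ (-β) * (2 * (K * r x ^ (β / 2)) ^ 2) :=
          mul_le_mul hCx hgrad gradSq_nonneg ((Real.exp_pos _).le.trans hCx)
      _ = C * (2 * K ^ 2) * (r x ^ (-β) * (r x ^ (β / 2)) ^ 2) := by ring
      _ = C * (2 * K ^ 2) := by rw [hrpow, mul_one]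
  exact add_le_add (by gcongr) hcoshx

lemma exists_eventually_abs_lap_sub_le (hr : ∀ᶠ x in F, 0 < r x)
    (hu : ∃ L, Tendsto (fun x => w x + u x - β * Real.log (r x)) F (𝓝 L))
    (hv : ∃ L, Tendsto (fun x => w x + v x - β * Real.log (r x)) F (𝓝 L))
    (hlap : ∀ᶠ x in F, lap (u - v) x = Real.exp (w x + v x) - Real.exp (w x + u x)) :
    ∃ A, ∀ᶠ x in F, |lap (u - v) x| ≤ A * r x ^ β := by
  obtain ⟨_, hu⟩ := hu
  obtain ⟨_, hv⟩ := hv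
  obtain ⟨A, hA⟩ := exists_eventually_exp_le_rpow hr hu
  obtain ⟨B, hB⟩ := exists_eventually_exp_le_rpow hr hv
  refine ⟨B + A, ?_⟩
  filter_upwards [hA, hB, hlap] with x hAx hBx hlapx
  rw [hlapx, add_mul]
  exact (abs_sub_le_of_nonneg_of_le (Real.exp_pos _).le (by linarith [Real.exp_pos (w x + u x)])
    (Real.exp_pos _).le (by linarith [Real.exp_pos (w x + v x)]))

lemma exists_eventually_exp_neg_meanExponent_le (hr : ∀ᶠ x in F, 0 < r x)
    (hu : ∃ L, Tendsto (fun x => w x + u x - β * Real.log (r x)) F (𝓝 L))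
    (hv : ∃ L, Tendsto (fun x => w x + v x - β * Real.log (r x)) F (𝓝 L)) :
    ∃ C, ∀ᶠ x in F, Real.exp (-meanExponent w u v x) ≤ C * r x ^ (-β) := by
  obtain ⟨_, hu⟩ := hu
  obtain ⟨_, hv⟩ := hv
  refine exists_eventually_exp_le_rpow hr (((hu.add hv).const_mul (-1 / 2)).congr fun x => ?_)
  rw [meanExponent]
  ring

lemma exists_tendsto_sub
    (hu : ∃ L, Tendsto (fun x => w x + u x - β * Real.log (r x)) F (𝓝 L))
    (hv : ∃ L, Tendsto (fun x => w x + v x - β * Real.log (r x)) F (𝓝 L)) :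
    ∃ L, Tendsto (u - v) F (𝓝 L) := by
  obtain ⟨_, hu⟩ := hu
  obtain ⟨_, hv⟩ := hv
  refine ⟨_, (hu.sub hv).congr fun x => ?_⟩
  rw [Pi.sub_apply]
  ring

end GrowthBounds

/-- `u` solves `Δu + e^(w + u) = 0` off the points `q j`, with `u - 2 α_j log |x - q_j|` having a
limit at each puncture. The last condition says that the metric `e^(w + u) |dx|²` extends over
the point at infinity of the sphere. -/
structure IsSingularLiouvilleSolution {ι : Type*} (q : ι → Pl) (α : ι → ℝ) (w u : Pl → ℝ) :
    Prop where
  contDiffOn : ContDiffOn ℝ 2 u (Set.range q)ᶜ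
  lap_eq : ∀ x ∈ (Set.range q)ᶜ, lap u x = -Real.exp (w x + u x)
  puncture : ∀ j, ∃ L, Tendsto (fun x => u x - 2 * α j * Real.log ‖x - q j‖)
    (𝓝[(Set.range q)ᶜ] (q j)) (𝓝 L)
  infinity : ∃ L, Tendsto (fun x => w x + u x + 4 * Real.log ‖x‖) (Bornology.cobounded Pl) (𝓝 L)

namespace IsSingularLiouvilleSolution

variable {ι : Type*} [Finite ι] {q : ι → Pl} {α : ι → ℝ} {w u v : Pl → ℝ} {x : Pl}

lemma contDiffAt (hu : IsSingularLiouvilleSolution q α w u) (hx : x ∈ (Set.range q)ᶜ) :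
    ContDiffAt ℝ 2 u x :=
  hu.contDiffOn.contDiffAt ((isOpen_compl_range q).mem_nhds hx)

lemma contDiffAt_meanExponent (hw : ContDiff ℝ 2 w) (hu : IsSingularLiouvilleSolution q α w u)
    (hv : IsSingularLiouvilleSolution q α w v) (hx : x ∈ (Set.range q)ᶜ) :
    ContDiffAt ℝ 2 (meanExponent w u v) x :=
  hw.contDiffAt.add (contDiffAt_const.mul ((hu.contDiffAt hx).add (hv.contDiffAt hx)))

lemma lap_sub_eq (hu : IsSingularLiouvilleSolution q α w u)
    (hv : IsSingularLiouvilleSolution q α w v) (hx : x ∈ (Set.range q)ᶜ) :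
    lap (u - v) x = Real.exp (w x + v x) - Real.exp (w x + u x) := by
  have h := lap_sub (hu.contDiffAt hx) (hv.contDiffAt hx)
  rw [hu.lap_eq x hx, hv.lap_eq x hx] at h
  exact h.trans (by ring)

lemma exp_add_eq_exp_meanExponent_mul (w u v : Pl → ℝ) (x : Pl) :
    Real.exp (w x + u x) = Real.exp (meanExponent w u v x) * Real.exp (1 / 2 * (u - v) x) ∧
      Real.exp (w x + v x) =
        Real.exp (meanExponent w u v x) * Real.exp (-(1 / 2 * (u - v) x)) := by
  simp only [← Real.exp_add, meanExponent, Pi.sub_apply]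
  constructor <;> ring_nf

lemma lap_sub_eq_sinh (hu : IsSingularLiouvilleSolution q α w u)
    (hv : IsSingularLiouvilleSolution q α w v) (hx : x ∈ (Set.range q)ᶜ) :
    lap (u - v) x =
      -2 * (Real.exp (meanExponent w u v x) * Real.sinh (1 / 2 * (u - v) x)) := by
  obtain ⟨hexp_u, hexp_v⟩ := exp_add_eq_exp_meanExponent_mul w u v x
  rw [hu.lap_sub_eq hv hx, hexp_u, hexp_v, Real.sinh_eq]
  ring

lemma lap_meanExponent (hw : ContDiff ℝ 2 w) (hu : IsSingularLiouvilleSolution q α w u)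
    (hv : IsSingularLiouvilleSolution q α w v) (hx : x ∈ (Set.range q)ᶜ) :
    lap (meanExponent w u v) x =
      lap w x - Real.exp (meanExponent w u v x) * Real.cosh (1 / 2 * (u - v) x) := by
  have hu2 := hu.contDiffAt hx
  have hv2 := hv.contDiffAt hx
  have hsplit : lap (meanExponent w u v) x = lap w x + 1 / 2 * (lap u x + lap v x) := by
    rw [← lap_add hu2 hv2, ← lap_const_mul _ (hu2.add hv2)]
    exact lap_add hw.contDiffAt (contDiffAt_const.mul (hu2.add hv2))
  obtain ⟨hexp_u, hexp_v⟩ := exp_add_eq_exp_meanExponent_mul w u v x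
  rw [hsplit, hu.lap_eq x hx, hv.lap_eq x hx, hexp_u, hexp_v, Real.cosh_eq]
  ring

lemma contDiffAt_three_sub (hw : ContDiff ℝ 2 w) (hu : IsSingularLiouvilleSolution q α w u)
    (hv : IsSingularLiouvilleSolution q α w v) (hx : x ∈ (Set.range q)ᶜ) :
    ContDiffAt ℝ 3 (u - v) x := by
  have hlap : ContDiffOn ℝ (2 : ℕ) (lap (u - v)) (Set.range q)ᶜ := by
    refine ContDiffOn.congr (fun y hy => ?_) fun y hy => hu.lap_sub_eq_sinh hv hy
    exact (contDiffAt_const.mul ((hu.contDiffAt_meanExponent hw hv hy).exp.mul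
      (Real.contDiff_sinh.contDiffAt.comp y
        (contDiffAt_const.mul ((hu.contDiffAt hy).sub (hv.contDiffAt hy)))))).contDiffWithinAt
  have h3 := contDiffOn_succ_of_lap (isOpen_compl_range q) (hu.contDiffOn.sub hv.contDiffOn) hlap
  exact h3.contDiffAt ((isOpen_compl_range q).mem_nhds hx)

lemma neg_mul_gradSq_le_lap_pFunction (hw : ContDiff ℝ 2 w)
    (hu : IsSingularLiouvilleSolution q α w u) (hv : IsSingularLiouvilleSolution q α w v)
    (hx : x ∈ (Set.range q)ᶜ) :
    -(1 / 4 * Real.exp (-meanExponent w u v x) * lap w x * gradSq (u - v) x) ≤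
      lap (pFunction (meanExponent w u v) (u - v)) x := by
  refine _root_.neg_mul_gradSq_le_lap_pFunction (hu.contDiffAt_meanExponent hw hv hx)
    (hu.contDiffAt_three_sub hw hv hx) ?_ (hu.lap_meanExponent hw hv hx)
  filter_upwards [(isOpen_compl_range q).mem_nhds hx] with y hy using hu.lap_sub_eq_sinh hv hy

lemma superharmonicOn_neg_pFunction (hw : ContDiff ℝ 2 w)
    (hlapw : ∀ x ∈ (Set.range q)ᶜ, lap w x ≤ 0) (hu : IsSingularLiouvilleSolution q α w u)
    (hv : IsSingularLiouvilleSolution q α w v) :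
    SuperharmonicOn (fun x => -pFunction (meanExponent w u v) (u - v) x) (Set.range q)ᶜ := by
  have hreg : ∀ x ∈ (Set.range q)ᶜ, ContDiffAt ℝ 2 (pFunction (meanExponent w u v) (u - v)) x :=
    fun x hx => contDiffAt_pFunction (hu.contDiffAt_meanExponent hw hv hx)
      (hu.contDiffAt_three_sub hw hv hx)
  refine ⟨fun x hx => (hreg x hx).neg, fun x hx => ?_⟩
  rw [lap_neg (hreg x hx), neg_nonpos]
  refine le_trans ?_ (hu.neg_mul_gradSq_le_lap_pFunction hw hv hx)
  have hκ : 0 ≤ -lap w x := neg_nonneg.2 (hlapw x hx)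
  have hproduct := mul_nonneg (mul_nonneg (Real.exp_pos (-meanExponent w u v x)).le hκ)
    (gradSq_nonneg (f := u - v) (x := x))
  linarith

lemma exists_tendsto_puncture (hw : Continuous w) (hu : IsSingularLiouvilleSolution q α w u)
    (j : ι) :
    ∃ L, Tendsto (fun x => w x + u x - 2 * α j * Real.log ‖x - q j‖) (𝓝[≠] (q j)) (𝓝 L) := by
  obtain ⟨L, hL⟩ := hu.puncture j
  have hle : 𝓝[≠] (q j) ≤ 𝓝[(Set.range q)ᶜ] (q j) :=
    le_inf nhdsWithin_le_nhds (le_principal_iff.2 (compl_range_mem_nhdsNE q (q j)))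
  exact ⟨_, (((hw.tendsto (q j)).mono_left nhdsWithin_le_nhds).add (hL.mono_left hle)).congr
    fun x => by ring⟩

lemma exists_eventually_pFunction_le_puncture (hw : ContDiff ℝ 2 w)
    (hu : IsSingularLiouvilleSolution q α w u) (hv : IsSingularLiouvilleSolution q α w v) (j : ι)
    (hα : α j ∈ Set.Ioc (-1 : ℝ) 0) :
    ∃ m, ∀ᶠ x in 𝓝[≠] (q j), pFunction (meanExponent w u v) (u - v) x ≤ m := by
  have hr : ∀ᶠ x in 𝓝[≠] (q j), 0 < ‖x - q j‖ := by
    filter_upwards [self_mem_nhdsWithin] with x hx using norm_pos_iff.2 (sub_ne_zero.2 hx)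
  have hu' := hu.exists_tendsto_puncture hw.continuous j
  have hv' := hv.exists_tendsto_puncture hw.continuous j
  obtain ⟨L, hL⟩ := exists_tendsto_sub hu' hv'
  have hΩ := compl_range_mem_nhdsNE q (q j)
  obtain ⟨A, hA⟩ := exists_eventually_abs_lap_sub_le hr hu' hv'
    (by filter_upwards [hΩ] with x hx using hu.lap_sub_eq hv hx)
  refine exists_eventually_pFunction_le hr hL ?_
    (exists_eventually_exp_neg_meanExponent_le hr hu' hv')
  have hs : 1 + α j ∈ Set.Ioc (0 : ℝ) 1 := ⟨by linarith [hα.1], by linarith [hα.2]⟩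
  have hgradient := exists_eventually_norm_fderiv_le_rpow (A := A) hs
    (by filter_upwards [hΩ] with x hx using (hu.contDiffAt hx).sub (hv.contDiffAt hx))
    (by simpa only [show 2 * (1 + α j) - 2 = 2 * α j by ring] using hA) hL
  simpa only [show 1 + α j - 1 = 2 * α j / 2 by ring] using hgradient

lemma exists_eventually_pFunction_le_infinity (hu : IsSingularLiouvilleSolution q α w u)
    (hv : IsSingularLiouvilleSolution q α w v) :
    ∃ m, ∀ᶠ x in Bornology.cobounded Pl, pFunction (meanExponent w u v) (u - v) x ≤ m := by
  have hr : ∀ᶠ x : Pl in Bornology.cobounded Pl, 0 < ‖x‖ :=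
    tendsto_norm_cobounded_atTop.eventually_gt_atTop 0
  have hu' : ∃ L, Tendsto (fun x => w x + u x - -4 * Real.log ‖x‖) (Bornology.cobounded Pl)
      (𝓝 L) := by simpa only [neg_mul, sub_neg_eq_add] using hu.infinity
  have hv' : ∃ L, Tendsto (fun x => w x + v x - -4 * Real.log ‖x‖) (Bornology.cobounded Pl)
      (𝓝 L) := by simpa only [neg_mul, sub_neg_eq_add] using hv.infinity
  obtain ⟨L, hL⟩ := exists_tendsto_sub hu' hv'
  have hΩ : (Set.range q)ᶜ ∈ Bornology.cobounded Pl :=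
    Bornology.isBounded_def.1 (Set.finite_range q).isBounded
  obtain ⟨A, hA⟩ := exists_eventually_abs_lap_sub_le hr hu' hv'
    (by filter_upwards [hΩ] with x hx using hu.lap_sub_eq hv hx)
  obtain ⟨K, hK⟩ := exists_eventually_norm_fderiv_le_inv_norm_sq (A := A)
    (by filter_upwards [hΩ] with x hx using (hu.contDiffAt hx).sub (hv.contDiffAt hx))
    (by filter_upwards [hA, hr] with x hx hrx
        rwa [Real.rpow_neg hrx.le, ← div_eq_mul_inv, Real.rpow_ofNat] at hx) hL
  refine exists_eventually_pFunction_le hr hL ⟨K, ?_⟩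
    (exists_eventually_exp_neg_meanExponent_le hr hu' hv')
  filter_upwards [hK, hr] with x hx hrx
  rwa [show (-4 / 2 : ℝ) = -2 by norm_num, Real.rpow_neg hrx.le, ← div_eq_mul_inv,
    Real.rpow_ofNat]

lemma bddAbove_pFunction (hw : ContDiff ℝ 2 w) (hα : ∀ j, α j ∈ Set.Ioc (-1 : ℝ) 0)
    (hu : IsSingularLiouvilleSolution q α w u) (hv : IsSingularLiouvilleSolution q α w v) :
    BddAbove (pFunction (meanExponent w u v) (u - v) '' (Set.range q)ᶜ) := by
  refine bddAbove_image_of_eventually_le (fun x => ?_)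
    (hu.exists_eventually_pFunction_le_infinity hv)
  by_cases hx : x ∈ Set.range q
  · obtain ⟨j, rfl⟩ := hx
    obtain ⟨m, hm⟩ := hu.exists_eventually_pFunction_le_puncture hw hv j (hα j)
    have hsub : (Set.range q)ᶜ ⊆ {q j}ᶜ :=
      Set.compl_subset_compl.2 (Set.singleton_subset_iff.2 ⟨j, rfl⟩)
    exact ⟨m, hm.filter_mono (nhdsWithin_mono _ hsub)⟩
  · have hcont := (contDiffAt_pFunction (hu.contDiffAt_meanExponent hw hv hx)
      (hu.contDiffAt_three_sub hw hv hx)).continuousAt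
    exact ⟨_, (hcont.mono_left nhdsWithin_le_nhds).eventually_le_const (lt_add_one _)⟩

lemma gradSq_sub_eq_zero (hw : ContDiff ℝ 2 w) (hlapw : ∀ x ∈ (Set.range q)ᶜ, lap w x < 0)
    (hα : ∀ j, α j ∈ Set.Ioc (-1 : ℝ) 0) (hu : IsSingularLiouvilleSolution q α w u)
    (hv : IsSingularLiouvilleSolution q α w v) (hx : x ∈ (Set.range q)ᶜ) :
    gradSq (u - v) x = 0 := by
  have hsuper := hu.superharmonicOn_neg_pFunction hw (fun y hy => (hlapw y hy).le) hv
  have hbdd : BddBelow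
      ((fun y => -pFunction (meanExponent w u v) (u - v) y) '' (Set.range q)ᶜ) := by
    obtain ⟨m, hm⟩ := hu.bddAbove_pFunction hw hα hv
    refine ⟨-m, ?_⟩
    rintro _ ⟨y, hy, rfl⟩
    exact neg_le_neg (hm (Set.mem_image_of_mem _ hy))
  have hconst : pFunction (meanExponent w u v) (u - v) =ᶠ[𝓝 x]
      fun _ => pFunction (meanExponent w u v) (u - v) x := by
    filter_upwards [(isOpen_compl_range q).mem_nhds hx] with y hy
    exact neg_injective (hsuper.eq_of_bddBelow (Set.finite_range q) hbdd hy hx)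
  have hlap := hu.neg_mul_gradSq_le_lap_pFunction hw hv hx
  rw [lap_congr hconst, lap_const] at hlap
  have hpos := mul_pos (Real.exp_pos (-meanExponent w u v x)) (neg_pos.2 (hlapw x hx))
  nlinarith [gradSq_nonneg (f := u - v) (x := x)]

end IsSingularLiouvilleSolution

theorem uniqueness_subcritical_sphere_general {ι : Type*} [Finite ι] {q : ι → Pl} {α : ι → ℝ}
    {w u₁ u₂ : Pl → ℝ} (hw : ContDiff ℝ 2 w) (hlapw : ∀ x ∈ (Set.range q)ᶜ, lap w x < 0)
    (hα : ∀ j, α j ∈ Set.Ioc (-1 : ℝ) 0) (h₁ : IsSingularLiouvilleSolution q α w u₁)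
    (h₂ : IsSingularLiouvilleSolution q α w u₂) : Set.EqOn u₁ u₂ (Set.range q)ᶜ := by
  intro x hx
  have hpderiv : ∀ i, pderiv i (u₁ - u₂) =ᶠ[𝓝 x] fun _ => 0 := fun i => by
    filter_upwards [(isOpen_compl_range q).mem_nhds hx] with y hy
    rw [pderiv, fderiv_eq_zero_of_gradSq_eq_zero (h₁.gradSq_sub_eq_zero hw hlapw hα h₂ hy)]
    rfl
  have hlap : lap (u₁ - u₂) x = 0 :=
    Finset.sum_eq_zero fun i _ => (pderiv_congr (hpderiv i) i).trans (pderiv_const 0 i x)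
  rw [h₁.lap_sub_eq h₂ hx, sub_eq_zero, Real.exp_eq_exp] at hlap
  exact (add_left_cancel hlap).symm

/-- The logarithm of the weight `h(x) = (1 + |x|²)^(-l)`. -/
def logWeight (l : ℝ) (x : Pl) : ℝ := -l * Real.log (1 + ‖x‖ ^ 2)

lemma contDiff_log_one_add_norm_sq : ContDiff ℝ 2 fun x : Pl => Real.log (1 + ‖x‖ ^ 2) :=
  (contDiff_const.add (contDiff_norm_sq ℝ)).log fun x => by positivity

lemma contDiff_logWeight (l : ℝ) : ContDiff ℝ 2 (logWeight l) :=
  contDiff_const.mul contDiff_log_one_add_norm_sq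

lemma lap_logWeight_neg {l : ℝ} (hl : 0 < l) (x : Pl) : lap (logWeight l) x < 0 := by
  have hlap : lap (logWeight l) x = -l * (4 / (1 + ‖x‖ ^ 2) ^ 2) := by
    rw [← lap_log_one_add_norm_sq]
    exact lap_const_mul _ contDiff_log_one_add_norm_sq.contDiffAt
  rw [hlap]
  exact mul_neg_of_neg_of_pos (neg_lt_zero.2 hl) (by positivity)

lemma exp_logWeight_add (l t : ℝ) (x : Pl) :
    Real.exp (logWeight l x + t) = (1 + ‖x‖ ^ 2) ^ (-l) * Real.exp t := by
  rw [Real.exp_add, Real.rpow_def_of_pos (by positivity), logWeight, mul_comm (-l)]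

lemma tendsto_log_one_add_norm_sq_sub :
    Tendsto (fun x : Pl => Real.log (1 + ‖x‖ ^ 2) - 2 * Real.log ‖x‖)
      (Bornology.cobounded Pl) (𝓝 0) := by
  have hnorm : Tendsto (fun x : Pl => ‖x‖ ^ 2) (Bornology.cobounded Pl) atTop :=
    (tendsto_pow_atTop two_ne_zero).comp tendsto_norm_cobounded_atTop
  refine ((Real.tendsto_log_comp_add_sub_log 1).comp hnorm).congr fun x => ?_
  rw [Function.comp_apply, Real.log_pow, add_comm, Nat.cast_two]

lemma SphSol.isSingularLiouvilleSolution {N : ℕ} {q : Fin N → Pl} {al : Fin N → ℝ} {ρ : ℝ}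
    {u : Pl → ℝ} (hu : SphSol N q al ρ u) :
    IsSingularLiouvilleSolution q al (logWeight ((4 * π * (2 + ∑ j, al j) - ρ) / (4 * π))) u := by
  obtain ⟨hreg, heq, hpuncture, -, L, hL⟩ := hu
  refine ⟨hreg, fun x hx => ?_, hpuncture, _,
    (hL.sub (tendsto_log_one_add_norm_sq_sub.const_mul 2)).congr fun x => ?_⟩
  · rw [exp_logWeight_add]
    linarith [heq x hx]
  · have hexponents : (ρ - 4 * π * (∑ j, al j)) / (4 * π) =
        2 - (4 * π * (2 + ∑ j, al j) - ρ) / (4 * π) := by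
      field_simp
      ring
    rw [hexponents, logWeight]
    ring

/-- Uniqueness for the subcritical singular Liouville equation on the sphere,
planar form (Theorem 1.7(i)). -/
theorem uniqueness_subcritical_sphere (N : ℕ) (q : Fin N → Pl)
    (hq : Function.Injective q) (al : Fin N → ℝ)
    (hal : ∀ j, al j ∈ Set.Ioo (-1 : ℝ) 0)
    (ρ : ℝ) (hρ : 0 < ρ) (hρ' : ρ < 4*π*(2 + ∑ j, al j))
    (u1 u2 : Pl → ℝ) (h1 : SphSol N q al ρ u1) (h2 : SphSol N q al ρ u2) :
    Set.EqOn u1 u2 (Set.range q)ᶜ := by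
  have hl : 0 < (4 * π * (2 + ∑ j, al j) - ρ) / (4 * π) :=
    div_pos (sub_pos.2 hρ') (by positivity)
  exact uniqueness_subcritical_sphere_general (contDiff_logWeight _)
    (fun x _ => lap_logWeight_neg hl x) (fun j => Set.Ioo_subset_Ioc_self (hal j))
    h1.isSingularLiouvilleSolution h2.isSingularLiouvilleSolution
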